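/- Let M = S², the 2-sphere, and let X be a C¹ vector field on M such that every singularity and every periodic orbit of X is hyperbolic. Then every continuous function f : M → ℝ invariant under the flow of X is constant. -/

import Mathlib

/-!
The set of singularities is finite, because a hyperbolic singularity is an isolated fixed point of
a time-`T` map (`hyperbolic_singularity_isolated`). If `f` were not constant, connectedness would
give it an interval of values, hence an attained value `c` which is not the value of any
singularity and whose level set `K = f⁻¹{c}` is not the whole sphere. This is contradicted by
`level_set_eq_univ`.

That lemma replaces the Poincaré–Bendixson theorem and the Jordan curve theorem behind it by an
argument about gaps in `K`. Let `N` be `V` rotated by a right angle, `V` being the vector field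
viewed as a map to `ℝ³`, and let `gam N x` be the half-circle normal to `V x`. If `y ∉ K` and `k`
is the point of `K` nearest to `y`, then (for the right sign of `N`) a short initial piece of
`gam N k`, without the point `k`, is disjoint from `K` (`exists_free`): `k` borders a gap of `K`.

* If `k` is periodic, its orbit is hyperbolic, so a multiple of the period, positive or negative,
  gives a return map on the transversal with derivative at most `1 / 2` in absolute value. As `f` is
  constant along the iterates of the return map, which tend to `k`, it is constant on the transversal
  near `k` (`periodic_return`, `hyperbolic_periodic_const`), so there is no gap at `k`.

* If `k` is not periodic, every `φ n k` borders a gap (`free_step`). Fix `θ > 0`. For large `n` the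
  gap at `φ n k` has width less than `θ` (`eventually_not_free`): otherwise two passages of the
  orbit near an accumulation point have gaps of width `θ`, and meet the transversal there at distinct
  heights differing by less than `θ`, so one of them lies in the gap of the other. Hence from some
  time on the far end of a gap can be followed by the flow inside the flow boxes, and it approaches
  `K`. By uniform continuity of the invariant function `f`, the far end belongs to `K` itself, a
  contradiction.

Everything is computed in `ℝ³`: tangent vectors are transported by the differential `dI` of the
inclusion, which is isometric (`norm_dI`), and the flow box (`exists_box`) is built by hand from the
intermediate value theorem.
-/

open Manifold Filter Topology Set Module Metric

noncomputable section

instance factS2 : Fact (Module.finrank ℝ (EuclideanSpace ℝ (Fin 3)) = 2 + 1) :=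
  ⟨by simp⟩

/-- The 2-sphere `S²`, as the unit sphere of `ℝ³`. -/
abbrev S2 : Type := Metric.sphere (0 : EuclideanSpace ℝ (Fin 3)) 1

/-- A hyperbolic singularity of the flow `φ` of `X` on `S²`: a fixed zero of `X` whose tangent
space splits into `Dφ_t`-invariant subspaces, contracted in the future resp. in the past. -/
def IsHypSingS2 (X : (x : S2) → TangentSpace (𝓡 2) x) (φ : ℝ → S2 → S2) (σ : S2) : Prop :=
  X σ = 0 ∧ (∀ t : ℝ, φ t σ = σ) ∧
  ∃ Es Eu : Submodule ℝ (EuclideanSpace ℝ (Fin 2)), IsCompl Es Eu ∧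
    (∀ t : ℝ, ∀ v ∈ Es,
      (show EuclideanSpace ℝ (Fin 2) →L[ℝ] EuclideanSpace ℝ (Fin 2) from
        mfderiv (𝓡 2) (𝓡 2) (φ t) σ) v ∈ Es) ∧
    (∀ t : ℝ, ∀ v ∈ Eu,
      (show EuclideanSpace ℝ (Fin 2) →L[ℝ] EuclideanSpace ℝ (Fin 2) from
        mfderiv (𝓡 2) (𝓡 2) (φ t) σ) v ∈ Eu) ∧
    ∃ T : ℝ, 0 < T ∧
      (∀ v ∈ Es, ‖(show EuclideanSpace ℝ (Fin 2) →L[ℝ] EuclideanSpace ℝ (Fin 2) from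
        mfderiv (𝓡 2) (𝓡 2) (φ T) σ) v‖ ≤ (1 / 2) * ‖v‖) ∧
      (∀ v ∈ Eu, ‖(show EuclideanSpace ℝ (Fin 2) →L[ℝ] EuclideanSpace ℝ (Fin 2) from
        mfderiv (𝓡 2) (𝓡 2) (φ (-T)) σ) v‖ ≤ (1 / 2) * ‖v‖)

/-- A hyperbolic periodic orbit on `S²`: see `IsHyperbolicClosedOrbit` in the paper. -/
def IsHypPerS2 (X : (x : S2) → TangentSpace (𝓡 2) x) (φ : ℝ → S2 → S2) (p : S2) : Prop :=
  X p ≠ 0 ∧ (∃ T0 : ℝ, 0 < T0 ∧ φ T0 p = p) ∧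
  ∃ Es Eu : ℝ → Submodule ℝ (EuclideanSpace ℝ (Fin 2)),
    (∀ t : ℝ, DirectSum.IsInternal
      ![Es t, Submodule.span ℝ {show EuclideanSpace ℝ (Fin 2) from X (φ t p)}, Eu t]) ∧
    (∀ s t : ℝ, ∀ v ∈ Es t,
      (show EuclideanSpace ℝ (Fin 2) →L[ℝ] EuclideanSpace ℝ (Fin 2) from
        mfderiv (𝓡 2) (𝓡 2) (φ s) (φ t p)) v ∈ Es (t + s)) ∧
    (∀ s t : ℝ, ∀ v ∈ Eu t,
      (show EuclideanSpace ℝ (Fin 2) →L[ℝ] EuclideanSpace ℝ (Fin 2) from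
        mfderiv (𝓡 2) (𝓡 2) (φ s) (φ t p)) v ∈ Eu (t + s)) ∧
    ∃ T : ℝ, 0 < T ∧
      (∀ t : ℝ, ∀ v ∈ Es t,
        ‖(show EuclideanSpace ℝ (Fin 2) →L[ℝ] EuclideanSpace ℝ (Fin 2) from
          mfderiv (𝓡 2) (𝓡 2) (φ T) (φ t p)) v‖ ≤ (1 / 2) * ‖v‖) ∧
      (∀ t : ℝ, ∀ v ∈ Eu t,
        ‖(show EuclideanSpace ℝ (Fin 2) →L[ℝ] EuclideanSpace ℝ (Fin 2) from
          mfderiv (𝓡 2) (𝓡 2) (φ (-T)) (φ t p)) v‖ ≤ (1 / 2) * ‖v‖)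

/-! ### The sphere in Euclidean space -/

set_option maxHeartbeats 400000

/-- The ambient Euclidean space `ℝ³`. -/
abbrev E3 : Type := EuclideanSpace ℝ (Fin 3)

/-- The model space `ℝ²` of the tangent spaces of the sphere. -/
abbrev E2 : Type := EuclideanSpace ℝ (Fin 2)

/-- The differential of the inclusion `S² → ℝ³`. -/
def dI (x : S2) : E2 →L[ℝ] E3 := mfderiv (𝓡 2) 𝓘(ℝ, E3) (Subtype.val : S2 → E3) x

lemma mdiff_coe (x : S2) : MDifferentiableAt (𝓡 2) 𝓘(ℝ, E3) (Subtype.val : S2 → E3) x :=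
  (contMDiff_coe_sphere (m := 1) x).mdifferentiableAt one_ne_zero

lemma hasMFDerivAt_coe (x : S2) :
    HasMFDerivAt (𝓡 2) 𝓘(ℝ, E3) (Subtype.val : S2 → E3) x (dI x) :=
  (mdiff_coe x).hasMFDerivAt

lemma stereographic'_neg_apply (v : S2) : stereographic' 2 (-v) v = 0 := by
  have h : stereographic' 2 (-v) v = (OrthonormalBasis.fromOrthogonalSpanSingleton (𝕜 := ℝ) 2
      (ne_zero_of_mem_unit_sphere (-v))).repr (stereographic (norm_eq_of_mem_sphere (-v)) v) := rfl
  rw [h, stereographic_neg_apply]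
  exact map_zero _

/-- `dI x` is isometric: in the stereographic chart centred at `x` it is the derivative at `0` of
inverse stereographic projection, composed with a linear isometry. -/
lemma norm_dI (x : S2) (w : E2) : ‖dI x w‖ = ‖w‖ := by
  have h0 : HasFDerivWithinAt (fun w : E2 => ((stereographic' 2 (-x)).symm w : E3)) (dI x)
      (range (𝓡 2)) (stereographic' 2 (-x) x) := (hasMFDerivAt_coe x).2
  rw [stereographic'_neg_apply] at h0
  have h1 : HasFDerivAt (fun w : E2 => ((stereographic' 2 (-x)).symm w : E3)) (dI x) 0 := by
    simpa using h0
  let U := (OrthonormalBasis.fromOrthogonalSpanSingleton (𝕜 := ℝ) 2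
    (ne_zero_of_mem_unit_sphere (-x))).repr
  have h2 : HasFDerivAt (stereoInvFunAux ((-x : S2) : E3) ∘
      (Subtype.val : (ℝ ∙ ((-x : S2) : E3))ᗮ → E3))
      (ℝ ∙ ((-x : S2) : E3))ᗮ.subtypeL (U.symm 0) := by
    rw [map_zero]
    exact hasFDerivAt_stereoInvFunAux_comp_coe _
  have h3 : HasFDerivAt (fun w : E2 => ((stereographic' 2 (-x)).symm w : E3))
      ((ℝ ∙ ((-x : S2) : E3))ᗮ.subtypeL.comp
        (U.symm.toContinuousLinearEquiv : E2 →L[ℝ] (ℝ ∙ ((-x : S2) : E3))ᗮ)) 0 :=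
    h2.comp 0 U.symm.toContinuousLinearEquiv.hasFDerivAt
  rw [h1.unique h3]
  change ‖U.symm w‖ = ‖w‖
  exact U.symm.norm_map w

lemma inner_dI (x : S2) (w : E2) : inner ℝ (x : E3) (dI x w) = 0 := by
  have h := range_mvfderiv_subtypeVal (n := 2) x
  have : dI x w ∈ (ℝ ∙ (x : E3))ᗮ := by
    rw [← h]; exact ⟨w, rfl⟩
  exact Submodule.mem_orthogonal_singleton_iff_inner_right.1 this

lemma mem_range_dI (x : S2) (v : E3) (h : inner ℝ (x : E3) v = 0) : ∃ w, dI x w = v := by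
  have h1 := range_mvfderiv_subtypeVal (n := 2) x
  have : v ∈ (ℝ ∙ (x : E3))ᗮ := Submodule.mem_orthogonal_singleton_iff_inner_right.2 h
  rw [← h1] at this
  exact this

/-- The vector field `X` viewed as an `ℝ³`-valued map on the sphere. -/
def amb (X : (x : S2) → TangentSpace (𝓡 2) x) (x : S2) : E3 := dI x (X x)

lemma hasDerivAt_amb {X : (x : S2) → TangentSpace (𝓡 2) x} {φ : ℝ → S2 → S2}
    (hφX : ∀ x t, HasMFDerivAt 𝓘(ℝ, ℝ) (𝓡 2) (fun s => φ s x) t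
      ((1 : ℝ →L[ℝ] ℝ).smulRight (X (φ t x)))) (x : S2) (t : ℝ) :
    HasDerivAt (fun s => (φ s x : E3)) (amb X (φ t x)) t := by
  have h := (hasMFDerivAt_coe (φ t x)).comp t (hφX x t)
  have h2 : HasFDerivAt (fun s => (φ s x : E3)) ((dI (φ t x)).comp
      ((1 : ℝ →L[ℝ] ℝ).smulRight (show E2 from X (φ t x)))) t := h.hasFDerivAt
  have h3 : ((dI (φ t x)).comp ((1 : ℝ →L[ℝ] ℝ).smulRight (show E2 from X (φ t x)))) 1 =
      amb X (φ t x) := by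
    change dI (φ t x) ((1 : ℝ) • (show E2 from X (φ t x))) = _
    rw [one_smul]; rfl
  rw [← h3]
  exact h2.hasDerivAt

lemma contMDiff_amb {X : (x : S2) → TangentSpace (𝓡 2) x}
    (hX : ContMDiff (𝓡 2) (𝓡 2).tangent 1 (fun x => (⟨x, X x⟩ : TangentBundle (𝓡 2) S2))) :
    ContMDiff (𝓡 2) 𝓘(ℝ, E3) 1 (amb X) := by
  have h1 : ContMDiff (𝓡 2).tangent 𝓘(ℝ, E3).tangent 1
      (tangentMap (𝓡 2) 𝓘(ℝ, E3) (Subtype.val : S2 → E3)) :=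
    (contMDiff_coe_sphere (m := 2)).contMDiff_tangentMap (by norm_num)
  exact (contMDiff_snd_tangentBundle_modelSpace E3 𝓘(ℝ, E3)).comp (h1.comp hX)

lemma S2.norm_coe (x : S2) : ‖(x : E3)‖ = 1 := norm_eq_of_mem_sphere x

/-- Radial projection to the sphere (with a junk value at the origin). -/
def nrm (y : E3) : S2 := if h : y = 0 then ⟨EuclideanSpace.single 0 1, by simp⟩ else
  ⟨‖y‖⁻¹ • y, by simp [norm_smul, h]⟩

lemma nrm_coe (x : S2) : nrm (x : E3) = x := by
  have h : (x : E3) ≠ 0 := ne_zero_of_mem_unit_sphere x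
  ext1
  simp [nrm, h]

lemma coe_nrm {y : E3} (h : y ≠ 0) : (nrm y : E3) = ‖y‖⁻¹ • y := by
  simp [nrm, h]

lemma contMDiffAt_nrm {y : E3} (h : y ≠ 0) : ContMDiffAt 𝓘(ℝ, E3) (𝓡 2) 1 nrm y := by
  let O : TopologicalSpace.Opens E3 := ⟨{0}ᶜ, isOpen_compl_singleton⟩
  have h1 : ContMDiff 𝓘(ℝ, E3) 𝓘(ℝ, E3) 1 (fun z : O => (nrm (z : E3) : E3)) := by
    intro z
    have hz : (z : E3) ≠ 0 := z.2
    have h2 : ContDiffAt ℝ 1 (fun z : E3 => (nrm z : E3)) z := by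
      have : ContDiffAt ℝ 1 (fun z : E3 => ‖z‖⁻¹ • z) z :=
        ((contDiffAt_norm ℝ hz).inv (norm_ne_zero_iff.2 hz)).smul contDiffAt_id
      refine this.congr_of_eventuallyEq ?_
      filter_upwards [isOpen_compl_singleton.mem_nhds hz] with u hu
      exact coe_nrm hu
    exact contMDiffAt_subtype_iff.2 h2.contMDiffAt
  have h3 := h1.codRestrict_sphere (n := 2) (fun z => (nrm (z : E3)).2)
  have h4 : ContMDiffAt 𝓘(ℝ, E3) (𝓡 2) 1 (fun z : O => nrm (z : E3)) ⟨y, h⟩ := h3 ⟨y, h⟩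
  exact contMDiffAt_subtype_iff.1 h4

/-- The extension of `g` to `ℝ³` that is constant along rays is differentiable on the sphere, with
a derivative extending the differential of `g`. -/
lemma exists_ambient_deriv {g : S2 → S2} (hg : MDifferentiable (𝓡 2) (𝓡 2) g) (a : S2) :
    ∃ D : E3 →L[ℝ] E3, HasFDerivAt (fun y : E3 => (g (nrm y) : E3)) D a ∧
      ∀ w : E2, D (dI a w) = dI (g a) ((show E2 →L[ℝ] E2 from mfderiv (𝓡 2) (𝓡 2) g a) w) := by
  have ha : (a : E3) ≠ 0 := ne_zero_of_mem_unit_sphere a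
  have h1 : MDifferentiableAt 𝓘(ℝ, E3) 𝓘(ℝ, E3) (fun y : E3 => (g (nrm y) : E3)) a := by
    have := (mdiff_coe (g (nrm a))).comp (a : E3) ((hg (nrm a)).comp (a : E3)
      ((contMDiffAt_nrm ha).mdifferentiableAt one_ne_zero))
    exact this
  have h2 := h1.differentiableAt.hasFDerivAt
  refine ⟨_, h2, fun w => ?_⟩
  have h3 := (h2.hasMFDerivAt).comp a (hasMFDerivAt_coe a)
  have h4 := (hasMFDerivAt_coe (g a)).comp a (hg a).hasMFDerivAt
  have h5 : (fun y : E3 => (g (nrm y) : E3)) ∘ (Subtype.val : S2 → E3) = Subtype.val ∘ g := by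
    ext1 x; simp [nrm_coe]
  rw [h5] at h3
  have := hasMFDerivAt_unique h3 h4
  exact congrArg (fun (L : E2 →L[ℝ] E3) => L w) this

/-- A `C¹` vector field is locally Lipschitz, hence Lipschitz by compactness. -/
lemma lipschitz_amb {X : (x : S2) → TangentSpace (𝓡 2) x}
    (hX : ContMDiff (𝓡 2) (𝓡 2).tangent 1 (fun x => (⟨x, X x⟩ : TangentBundle (𝓡 2) S2))) :
    ∃ L : NNReal, LipschitzWith L (amb X) := by
  have hloc : LocallyLipschitz (amb X) := by
    intro a
    have ha : (a : E3) ≠ 0 := ne_zero_of_mem_unit_sphere a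
    have h1 : ContMDiffAt 𝓘(ℝ, E3) 𝓘(ℝ, E3) 1 (fun y : E3 => amb X (nrm y)) a := by
      have := (contMDiff_amb hX (nrm a)).comp (a : E3) (contMDiffAt_nrm ha)
      exact this
    obtain ⟨K, t, ht, hK⟩ := h1.contDiffAt.exists_lipschitzOnWith
    refine ⟨K, Subtype.val ⁻¹' t, continuous_subtype_val.continuousAt.preimage_mem_nhds ht, ?_⟩
    intro x hx y hy
    have := hK hx hy
    simp only [nrm_coe] at this
    exact this
  obtain ⟨K, hK⟩ := hloc.locallyLipschitzOn.exists_lipschitzOnWith_of_compact (s := univ) isCompact_univ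
  exact ⟨K, lipschitzOnWith_univ.1 hK⟩

/-! ### Flows on the sphere and normal half-circles -/

/-- A flow `φ` on the sphere generated by a Lipschitz tangent vector field, the latter being viewed
as an `ℝ³`-valued map `V`. -/
structure IsSphereFlow (φ : ℝ → S2 → S2) (V : S2 → E3) : Prop where
  zero : ∀ x, φ 0 x = x
  add : ∀ s t x, φ (s + t) x = φ s (φ t x)
  cont : Continuous fun q : ℝ × S2 => φ q.1 q.2
  deriv : ∀ x t, HasDerivAt (fun s => (φ s x : E3)) (V (φ t x)) t
  tan : ∀ x : S2, inner ℝ (x : E3) (V x) = 0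
  lip : ∃ L : NNReal, LipschitzWith L V

/-- A continuous field `N` of vectors tangent to the sphere, orthogonal to `V` and of the same
length. -/
structure IsNormalField (V N : S2 → E3) : Prop where
  cont : Continuous N
  tan : ∀ x : S2, inner ℝ (x : E3) (N x) = 0
  orth : ∀ x : S2, inner ℝ (V x) (N x) = 0
  norm : ∀ x : S2, ‖N x‖ = ‖V x‖

/-- The great half-circle through `x` in the direction of `N x`, in gnomonic parametrization. -/
def gam (N : S2 → E3) (x : S2) (r : ℝ) : S2 := nrm ((x : E3) + r • N x)

namespace IsSphereFlow

variable {φ : ℝ → S2 → S2} {V : S2 → E3}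

lemma reverse (h : IsSphereFlow φ V) : IsSphereFlow (fun t => φ (-t)) (fun x => -V x) where
  zero x := by simp [h.zero]
  add s t x := by rw [neg_add, h.add]
  cont := h.cont.comp ((continuous_fst.neg).prodMk continuous_snd)
  deriv x t := by
    have := (h.deriv x (-t)).scomp t (hasDerivAt_neg t)
    simp only [neg_smul, one_smul] at this
    exact this
  tan x := by simp [h.tan]
  lip := by
    obtain ⟨L, hL⟩ := h.lip
    exact ⟨L, hL.neg⟩

lemma continuous_V (h : IsSphereFlow φ V) : Continuous V := by
  obtain ⟨L, hL⟩ := h.lip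
  exact hL.continuous

lemma cont_t (h : IsSphereFlow φ V) (x : S2) : Continuous fun t => φ t x :=
  h.cont.comp (continuous_id.prodMk continuous_const)

lemma cont_x (h : IsSphereFlow φ V) (t : ℝ) : Continuous (φ t) :=
  h.cont.comp (continuous_const.prodMk continuous_id)

lemma neg_cancel (h : IsSphereFlow φ V) (t : ℝ) (x : S2) : φ (-t) (φ t x) = x := by
  rw [← h.add]; simp [h.zero]

lemma dist_le_pos (h : IsSphereFlow φ V) {L : NNReal} (hL : LipschitzWith L V) (x y : S2) {t : ℝ}
    (ht : 0 ≤ t) : dist (φ t x) (φ t y) ≤ dist x y * Real.exp (L * t) := by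
  have key := dist_le_of_trajectories_ODE_of_mem (v := fun _ z => V (nrm z)) (K := L)
    (s := fun _ => sphere (0 : E3) 1) (f := fun s => (φ s x : E3)) (g := fun s => (φ s y : E3))
    (a := 0) (b := t) (δ := dist x y) ?_ ?_ ?_ ?_ ?_ ?_ ?_ ?_ t ⟨ht, le_rfl⟩
  · simpa [Subtype.dist_eq] using key
  · intro _ _ u hu v hv
    have h1 := nrm_coe ⟨u, hu⟩
    have h2 := nrm_coe ⟨v, hv⟩
    have := hL ⟨u, hu⟩ ⟨v, hv⟩
    simp only at h1 h2 ⊢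
    rw [h1, h2]
    exact this
  · exact (continuous_subtype_val.comp (h.cont_t x)).continuousOn
  · intro s _
    simpa [nrm_coe] using (h.deriv x s).hasDerivWithinAt
  · intro s _; exact (φ s x).2
  · exact (continuous_subtype_val.comp (h.cont_t y)).continuousOn
  · intro s _
    simpa [nrm_coe] using (h.deriv y s).hasDerivWithinAt
  · intro s _; exact (φ s y).2
  · simp [h.zero, Subtype.dist_eq]

/-- Grönwall's inequality: the time-`t` map is Lipschitz with constant `exp (L * |t|)`. -/
lemma exists_dist_le (h : IsSphereFlow φ V) :
    ∃ L : ℝ, 0 ≤ L ∧ ∀ t x y, dist (φ t x) (φ t y) ≤ dist x y * Real.exp (L * |t|) := by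
  obtain ⟨L, hL⟩ := h.lip
  refine ⟨L, L.2, fun t x y => ?_⟩
  rcases le_total 0 t with ht | ht
  · rw [abs_of_nonneg ht]; exact h.dist_le_pos hL x y ht
  · rw [abs_of_nonpos ht]
    simpa using h.reverse.dist_le_pos hL.neg x y (neg_nonneg.2 ht)

lemma exists_bound (h : IsSphereFlow φ V) : ∃ B : ℝ, 1 ≤ B ∧ ∀ x, ‖V x‖ ≤ B := by
  obtain ⟨C, hC⟩ := isCompact_univ.exists_bound_of_continuousOn (h.continuous_V.continuousOn)
  exact ⟨max 1 C, le_max_left _ _, fun x => (hC x trivial).trans (le_max_right _ _)⟩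

lemma dist_self_le (h : IsSphereFlow φ V) {B : ℝ} (hB : ∀ x, ‖V x‖ ≤ B) (s : ℝ) (x : S2) :
    dist (φ s x) x ≤ B * |s| := by
  have := convex_univ.norm_image_sub_le_of_norm_hasDerivWithin_le (f := fun s => (φ s x : E3))
    (f' := fun s => V (φ s x)) (C := B) (x := (0 : ℝ)) (y := s)
    (fun t _ => (h.deriv x t).hasDerivWithinAt) (fun t _ => hB _) trivial trivial
  simpa [Subtype.dist_eq, dist_eq_norm, h.zero] using this

/-- First order expansion of the flow in time, uniformly near `a`. -/
lemma norm_sub_le (h : IsSphereFlow φ V) {B : ℝ} (hB : ∀ x, ‖V x‖ ≤ B) {L : NNReal}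
    (hL : LipschitzWith L V) (s : ℝ) (y a : S2) :
    ‖(φ s y : E3) - y - s • V a‖ ≤ L * (B * |s| + dist y a) * |s| := by
  have := (convex_uIcc (0 : ℝ) s).norm_image_sub_le_of_norm_hasDerivWithin_le
    (f := fun s => (φ s y : E3) - s • V a)
    (f' := fun s => V (φ s y) - V a) (C := L * (B * |s| + dist y a)) (x := (0 : ℝ)) (y := s)
    (fun t _ => by
      have h1 := (h.deriv y t).sub ((hasDerivAt_id t).smul_const (V a))
      simp only [one_smul] at h1
      exact h1.hasDerivWithinAt) (fun t ht => ?_) left_mem_uIcc right_mem_uIcc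
  · simp only [h.zero, zero_smul, sub_zero, Real.norm_eq_abs] at this
    rw [sub_right_comm]; exact this
  · have h1 : |t| ≤ |s| := by simpa using abs_sub_left_of_mem_uIcc ht
    have hB0 : 0 ≤ B := (norm_nonneg _).trans (hB y)
    rw [← dist_eq_norm]
    refine (hL.dist_le_mul _ _).trans ?_
    gcongr
    calc dist (φ t y) a ≤ dist (φ t y) y + dist y a := dist_triangle _ _ _
      _ ≤ B * |t| + dist y a := by gcongr; exact h.dist_self_le hB t y
      _ ≤ _ := by gcongr

lemma inner_V (h : IsSphereFlow φ V) (x : S2) : inner ℝ (V x) (x : E3) = 0 := by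
  rw [real_inner_comm]; exact h.tan x

end IsSphereFlow

/-- The cross product `x × V x` is a normal field. -/
lemma exists_normalField {V : S2 → E3} (hV : Continuous V)
    (htan : ∀ x : S2, inner ℝ (x : E3) (V x) = 0) : ∃ N, IsNormalField V N := by
  refine ⟨fun x => !₂[(x : E3) 1 * V x 2 - (x : E3) 2 * V x 1,
    (x : E3) 2 * V x 0 - (x : E3) 0 * V x 2, (x : E3) 0 * V x 1 - (x : E3) 1 * V x 0],
    ?_, fun x => ?_, fun x => ?_, fun x => ?_⟩
  · fun_prop
  · simp [PiLp.inner_apply, Fin.sum_univ_three]; ring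
  · simp [PiLp.inner_apply, Fin.sum_univ_three]; ring
  · have h1 := htan x
    have h2 := S2.norm_coe x
    rw [EuclideanSpace.norm_eq, Real.sqrt_eq_one] at h2
    simp only [PiLp.inner_apply, Fin.sum_univ_three] at h1 h2
    rw [EuclideanSpace.norm_eq, EuclideanSpace.norm_eq]
    congr 1
    simp [Fin.sum_univ_three] at h1 h2 ⊢
    linear_combination ((V x 0) ^ 2 + (V x 1) ^ 2 + (V x 2) ^ 2) * h2 -
      (V x 0 * (x : E3) 0 + V x 1 * (x : E3) 1 + V x 2 * (x : E3) 2) * h1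

namespace IsNormalField

variable {V N : S2 → E3}

lemma neg (h : IsNormalField V N) : IsNormalField V (fun x => -N x) where
  cont := h.cont.neg
  tan x := by simp [h.tan]
  orth x := by simp [h.orth]
  norm x := by simp [h.norm]

lemma norm_add (h : IsNormalField V N) (x : S2) (r : ℝ) :
    ‖(x : E3) + r • N x‖ ^ 2 = 1 + r ^ 2 * ‖N x‖ ^ 2 := by
  rw [norm_add_sq_real, inner_smul_right, h.tan, S2.norm_coe, norm_smul, mul_pow]
  simp

lemma one_le_norm (h : IsNormalField V N) (x : S2) (r : ℝ) : 1 ≤ ‖(x : E3) + r • N x‖ := by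
  have := h.norm_add x r
  nlinarith [norm_nonneg ((x : E3) + r • N x), mul_nonneg (sq_nonneg r) (sq_nonneg ‖N x‖)]

lemma ne_zero (h : IsNormalField V N) (x : S2) (r : ℝ) : (x : E3) + r • N x ≠ 0 := by
  rw [← norm_pos_iff]; linarith [h.one_le_norm x r]

lemma coe_gam (h : IsNormalField V N) (x : S2) (r : ℝ) :
    (gam N x r : E3) = ‖(x : E3) + r • N x‖⁻¹ • ((x : E3) + r • N x) :=
  coe_nrm (h.ne_zero x r)

lemma gam_zero (_h : IsNormalField V N) (x : S2) : gam N x 0 = x := by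
  simp [gam, nrm_coe]

lemma continuous_gam (h : IsNormalField V N) : Continuous fun q : S2 × ℝ => gam N q.1 q.2 := by
  rw [Topology.IsInducing.subtypeVal.continuous_iff]
  have h1 : Continuous fun q : S2 × ℝ => (q.1 : E3) + q.2 • N q.1 := by
    have := h.cont
    fun_prop
  have h2 : Continuous fun q : S2 × ℝ => ‖(q.1 : E3) + q.2 • N q.1‖⁻¹ •
      ((q.1 : E3) + q.2 • N q.1) :=
    (h1.norm.inv₀ (fun q => norm_ne_zero_iff.2 (h.ne_zero _ _))).smul h1
  convert h2 using 1
  ext1 q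
  exact h.coe_gam q.1 q.2

lemma inner_V_gam (h : IsNormalField V N) (x : S2) (hx : inner ℝ (V x) (x : E3) = 0) (r : ℝ) :
    inner ℝ (V x) (gam N x r : E3) = 0 := by
  rw [h.coe_gam, inner_smul_right, inner_add_right, inner_smul_right, h.orth, hx]; simp

lemma inner_x_gam (h : IsNormalField V N) (x : S2) (r : ℝ) :
    inner ℝ (x : E3) (gam N x r : E3) = ‖(x : E3) + r • N x‖⁻¹ := by
  rw [h.coe_gam, inner_smul_right, inner_add_right, inner_smul_right, h.tan]
  simp

lemma inner_N_gam (h : IsNormalField V N) (x : S2) (r : ℝ) :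
    inner ℝ (N x) (gam N x r : E3) = ‖(x : E3) + r • N x‖⁻¹ * (r * ‖N x‖ ^ 2) := by
  rw [h.coe_gam, inner_smul_right, inner_add_right, inner_smul_right, real_inner_comm, h.tan]
  simp

lemma dist_gam_le (h : IsNormalField V N) (x : S2) (r : ℝ) :
    dist (gam N x r) x ≤ 2 * (|r| * ‖N x‖) := by
  set g := (x : E3) + r • N x with hg
  have h1 : 1 ≤ ‖g‖ := h.one_le_norm x r
  have h2 : ‖g - x‖ = |r| * ‖N x‖ := by simp [hg, norm_smul]
  have h3 : ‖g‖ ≤ 1 + |r| * ‖N x‖ := by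
    calc ‖g‖ = ‖(x : E3) + (g - x)‖ := by simp
      _ ≤ ‖(x : E3)‖ + ‖g - x‖ := norm_add_le _ _
      _ = _ := by rw [h2, S2.norm_coe x]
  have h4 : ‖(gam N x r : E3) - g‖ = ‖g‖ - 1 := by
    rw [h.coe_gam, ← hg]
    have : ‖g‖⁻¹ • g - g = (‖g‖⁻¹ - 1) • g := by rw [sub_smul, one_smul]
    have h5 : ‖g‖⁻¹ ≤ 1 := inv_le_one_of_one_le₀ h1
    rw [this, norm_smul, Real.norm_eq_abs, abs_of_nonpos (by linarith)]
    have : ‖g‖⁻¹ * ‖g‖ = 1 := inv_mul_cancel₀ (by linarith)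
    linarith
  rw [Subtype.dist_eq, dist_eq_norm]
  calc ‖(gam N x r : E3) - x‖ = ‖((gam N x r : E3) - g) + (g - x)‖ := by simp
    _ ≤ _ := norm_add_le _ _
    _ ≤ _ := by rw [h2, h4]; linarith

/-- A vector orthogonal to `V x` is a combination of `x` and `N x`. -/
lemma expand (h : IsNormalField V N) {x : S2} (hVx : inner ℝ (x : E3) (V x) = 0) (hx : V x ≠ 0)
    (z : E3) (hz : inner ℝ (V x) z = 0) :
    z = (inner ℝ (x : E3) z : ℝ) • (x : E3) + ((inner ℝ (N x) z : ℝ) / ‖N x‖ ^ 2) • N x := by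
  have hV0 : ‖V x‖ ≠ 0 := norm_ne_zero_iff.2 hx
  have hN0 : ‖N x‖ ≠ 0 := by rw [h.norm]; exact hV0
  have ho : Orthonormal ℝ ![(x : E3), ‖V x‖⁻¹ • V x, ‖N x‖⁻¹ • N x] := by
    rw [orthonormal_iff_ite]
    intro i j
    have e1 := hVx
    have e2 := h.tan x
    have e3 := h.orth x
    have e1' : inner ℝ (V x) (x : E3) = 0 := by rw [real_inner_comm]; exact e1
    have e2' : inner ℝ (N x) (x : E3) = 0 := by rw [real_inner_comm]; exact e2
    have e3' : inner ℝ (N x) (V x) = 0 := by rw [real_inner_comm]; exact e3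
    fin_cases i <;> fin_cases j <;>
      simp [inner_smul_left, inner_smul_right, e1, e2, e3, e1', e2', e3', norm_smul] <;>
      field_simp <;> simp
  have hs := ho.linearIndependent.span_eq_top_of_card_eq_finrank (by simp)
  have hb := (OrthonormalBasis.mk ho hs.ge).sum_repr z
  simp [Fin.sum_univ_three, OrthonormalBasis.repr_apply_apply, inner_smul_left, hz] at hb
  conv_lhs => rw [← hb]
  rw [smul_smul]
  congr 2
  field_simp

lemma gam_eq (h : IsNormalField V N) {x : S2} (hVx : inner ℝ (x : E3) (V x) = 0) (hx : V x ≠ 0)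
    (z : S2) (hz : inner ℝ (V x) (z : E3) = 0) (hpos : 0 < inner ℝ (x : E3) (z : E3)) :
    gam N x ((inner ℝ (N x) (z : E3) : ℝ) / (inner ℝ (x : E3) (z : E3) * ‖N x‖ ^ 2)) = z := by
  have h1 := h.expand hVx hx z hz
  set α : ℝ := inner ℝ (x : E3) (z : E3)
  set β : ℝ := inner ℝ (N x) (z : E3)
  have h2 : (z : E3) = α • ((x : E3) + (β / (α * ‖N x‖ ^ 2)) • N x) := by
    conv_lhs => rw [h1]
    rw [smul_add, smul_smul]
    congr 2
    field_simp
  have h3 : ‖(x : E3) + (β / (α * ‖N x‖ ^ 2)) • N x‖⁻¹ = α := by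
    have := S2.norm_coe z
    rw [h2, norm_smul, Real.norm_of_nonneg hpos.le] at this
    exact inv_eq_of_mul_eq_one_left this
  ext1
  rw [h.coe_gam, h3, ← h2]

end IsNormalField

/-! ### Flow boxes -/

/-- Flow-box data along a set `K`: for `x ∈ K` and `y` within `ε` of `x`, the orbit of `y` meets
the half-circle through `x` normal to `V x` after the short time `τ x y`, in the point of
parameter `U x y`. -/
structure IsBox (φ : ℝ → S2 → S2) (V N : S2 → E3) (K : Set S2) (ε C : ℝ) (τ U : S2 → S2 → ℝ) :
    Prop where
  pos : 0 < ε
  tau_lt : ∀ x ∈ K, ∀ y, dist y x < ε → |τ x y| < 1 / 2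
  tau_le : ∀ x ∈ K, ∀ y, dist y x < ε → |τ x y| ≤ C * |inner ℝ (V x) (y : E3)|
  gam_U : ∀ x ∈ K, ∀ y, dist y x < ε → φ (τ x y) y = gam N x (U x y)
  U_eq : ∀ x ∈ K, ∀ y, dist y x < ε → U x y = inner ℝ (N x) (φ (τ x y) y : E3) /
    (inner ℝ (x : E3) (φ (τ x y) y : E3) * ‖N x‖ ^ 2)
  U_gam : ∀ x ∈ K, ∀ r, dist (gam N x r) x < ε → U x (gam N x r) = r
  inner_ge : ∀ x ∈ K, ∀ y, dist y x < ε → 1 / 2 ≤ (inner ℝ (x : E3) (φ (τ x y) y : E3) : ℝ)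
  cont : ContinuousOn (fun q : S2 × S2 => U q.1 q.2) {q | q.1 ∈ K ∧ dist q.2 q.1 < ε}

/-- The transit time is found by the intermediate value theorem applied to
`s ↦ ⟪V x, φ s y⟫`, which increases at a definite rate. -/
lemma exists_box {φ : ℝ → S2 → S2} {V N : S2 → E3} (hF : IsSphereFlow φ V)
    (hN : IsNormalField V N) {K : Set S2} (hK : IsCompact K) (hVK : ∀ x ∈ K, V x ≠ 0) :
    ∃ (ε C : ℝ) (τ U : S2 → S2 → ℝ), IsBox φ V N K ε C τ U := by
  obtain ⟨L, hL⟩ := hF.lip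
  obtain ⟨B, hB1, hB⟩ := hF.exists_bound
  obtain ⟨m, hm, hmV⟩ := hK.exists_forall_le' (f := fun x => ‖V x‖ ^ 2) (a := 0)
    (hF.continuous_V.norm.pow 2).continuousOn (fun x hx => by
      have := norm_pos_iff.2 (hVK x hx); positivity)
  have hB0 : 0 < B := by linarith
  have hL0 : (0 : ℝ) ≤ L := L.2
  obtain ⟨δ, hδ0, hδ1, hδ2⟩ : ∃ δ : ℝ, 0 < δ ∧ δ ≤ 1 / 2 ∧ B * (L * δ) ≤ m / 2 := by
    refine ⟨min (1 / 2) (m / (2 * B * (L + 1))), by positivity, min_le_left _ _, ?_⟩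
    have h1 := min_le_right (1 / 2) (m / (2 * B * (L + 1)))
    set δ := min (1 / 2) (m / (2 * B * (L + 1)))
    have hδ : 0 ≤ δ := by positivity
    rw [le_div_iff₀ (by positivity)] at h1
    nlinarith [mul_nonneg hB0.le hδ]
  obtain ⟨s0, hs0, hs1, hs2⟩ : ∃ s0 : ℝ, 0 < s0 ∧ s0 ≤ 1 / 4 ∧ B * s0 ≤ δ / 2 := by
    refine ⟨min (1 / 4) (δ / (2 * B)), by positivity, min_le_left _ _, ?_⟩
    calc B * min (1 / 4) (δ / (2 * B)) ≤ B * (δ / (2 * B)) := by gcongr; exact min_le_right _ _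
      _ = δ / 2 := by field_simp
  obtain ⟨ε, hε0, hε1, hε2⟩ : ∃ ε : ℝ, 0 < ε ∧ ε ≤ δ / 2 ∧ B * ε ≤ m / 2 * s0 := by
    refine ⟨min (δ / 2) (m / 2 * s0 / B), by positivity, min_le_left _ _, ?_⟩
    calc B * min (δ / 2) (m / 2 * s0 / B) ≤ B * (m / 2 * s0 / B) := by
          gcongr; exact min_le_right _ _
      _ = m / 2 * s0 := by field_simp
  have hdist : ∀ x y : S2, dist y x < ε → ∀ s, |s| ≤ s0 → dist (φ s y) x ≤ δ := by
    intro x y hy s hs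
    have h1 := hF.dist_self_le hB s y
    have h2 : B * |s| ≤ B * s0 := by gcongr
    linarith [dist_triangle (φ s y) y x]
  have hinner : ∀ x z : S2, dist z x ≤ δ → 1 / 2 ≤ (inner ℝ (x : E3) (z : E3) : ℝ) := by
    intro x z hz
    have h1 : (inner ℝ (x : E3) (z : E3) : ℝ) = 1 + inner ℝ (x : E3) ((z : E3) - x) := by
      rw [inner_sub_right, real_inner_self_eq_norm_sq, S2.norm_coe]; ring
    have h2 := abs_real_inner_le_norm (x : E3) ((z : E3) - x)
    rw [S2.norm_coe, one_mul, ← dist_eq_norm, ← Subtype.dist_eq] at h2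
    linarith [neg_abs_le (inner ℝ (x : E3) ((z : E3) - x) : ℝ)]
  have hmono : ∀ x ∈ K, ∀ y : S2, dist y x < ε → ∀ s ∈ Icc (-s0) s0, ∀ t ∈ Icc (-s0) s0, s ≤ t →
      m / 2 * (t - s) ≤ inner ℝ (V x) (φ t y : E3) - inner ℝ (V x) (φ s y : E3) := by
    intro x hx y hy
    have hd : ∀ s, HasDerivAt (fun s => (inner ℝ (V x) (φ s y : E3) : ℝ))
        (inner ℝ (V x) (V (φ s y))) s := by
      intro s
      have := (hasDerivAt_const s (V x)).inner ℝ (hF.deriv y s)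
      simpa using this
    intro s hs t ht hst
    refine (convex_Icc (-s0) s0).mul_sub_le_image_sub_of_le_deriv
      (f := fun s => (inner ℝ (V x) (φ s y : E3) : ℝ))
      (fun s _ => (hd s).continuousAt.continuousWithinAt)
      (fun s _ => (hd s).differentiableAt.differentiableWithinAt) ?_ s hs t ht hst
    intro u hu
    rw [interior_Icc] at hu
    rw [(hd u).deriv]
    have h1 : (inner ℝ (V x) (V (φ u y)) : ℝ) =
        ‖V x‖ ^ 2 + inner ℝ (V x) (V (φ u y) - V x) := by
      rw [inner_sub_right, real_inner_self_eq_norm_sq]; ring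
    have h2 := abs_real_inner_le_norm (V x) (V (φ u y) - V x)
    have h3 : ‖V (φ u y) - V x‖ ≤ L * δ := by
      rw [← dist_eq_norm]
      refine (hL.dist_le_mul _ _).trans ?_
      gcongr
      exact hdist x y hy u (abs_le.2 ⟨hu.1.le, hu.2.le⟩)
    have h4 : ‖V x‖ * ‖V (φ u y) - V x‖ ≤ B * (L * δ) := by gcongr; exact hB x
    have h5 := hmV x hx
    linarith [neg_abs_le (inner ℝ (V x) (V (φ u y) - V x) : ℝ)]
  have hmono' : ∀ x ∈ K, ∀ y : S2, dist y x < ε → ∀ s ∈ Icc (-s0) s0, ∀ t ∈ Icc (-s0) s0,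
      m / 2 * |t - s| ≤ |(inner ℝ (V x) (φ t y : E3) : ℝ) - inner ℝ (V x) (φ s y : E3)| := by
    intro x hx y hy s hs t ht
    rcases le_total s t with h | h
    · rw [abs_of_nonneg (sub_nonneg.2 h)]
      exact (hmono x hx y hy s hs t ht h).trans (le_abs_self _)
    · rw [abs_sub_comm, abs_of_nonneg (sub_nonneg.2 h), abs_sub_comm (inner ℝ (V x) _ : ℝ)]
      exact (hmono x hx y hy t ht s hs h).trans (le_abs_self _)
  have h0mem : (0 : ℝ) ∈ Icc (-s0) s0 := ⟨by linarith, hs0.le⟩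
  have hex : ∀ x y : S2, ∃ t : ℝ, x ∈ K → dist y x < ε →
      t ∈ Icc (-s0) s0 ∧ inner ℝ (V x) (φ t y : E3) = 0 := by
    intro x y
    by_cases hx : x ∈ K; swap
    · exact ⟨0, fun h => absurd h hx⟩
    by_cases hy : dist y x < ε; swap
    · exact ⟨0, fun _ h => absurd h hy⟩
    have hm := hmono x hx y hy
    have hg0 : |(inner ℝ (V x) (y : E3) : ℝ)| ≤ m / 2 * s0 := by
      have h1 : (inner ℝ (V x) (y : E3) : ℝ) = inner ℝ (V x) ((y : E3) - x) := by
        rw [inner_sub_right, hF.inner_V, sub_zero]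
      rw [h1]
      refine (abs_real_inner_le_norm _ _).trans (le_trans ?_ hε2)
      rw [← dist_eq_norm, ← Subtype.dist_eq]
      gcongr
      exact hB x
    have h1 := hm (-s0) ⟨le_rfl, by linarith⟩ 0 h0mem (by linarith)
    have h2 := hm 0 h0mem s0 ⟨by linarith, le_rfl⟩ (by linarith)
    rw [hF.zero] at h1 h2
    have h3 := abs_le.1 hg0
    have hc : ContinuousOn (fun s => (inner ℝ (V x) (φ s y : E3) : ℝ)) (Icc (-s0) s0) :=
      (continuous_const.inner (continuous_subtype_val.comp (hF.cont_t y))).continuousOn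
    obtain ⟨t, ht, h⟩ := intermediate_value_Icc (by linarith) hc
      (show (0 : ℝ) ∈ Icc _ _ from ⟨by linarith, by linarith⟩)
    exact ⟨t, fun _ _ => ⟨ht, h⟩⟩
  choose τ hτ using hex
  have hτd : ∀ x ∈ K, ∀ y : S2, dist y x < ε → dist (φ (τ x y) y) x ≤ δ := fun x hx y hy =>
    hdist x y hy _ (abs_le.2 (hτ x y hx hy).1)
  have hle : ∀ x ∈ K, ∀ y, dist y x < ε → |τ x y| ≤ 2 / m * |inner ℝ (V x) (y : E3)| := by
    intro x hx y hy
    obtain ⟨h1, h2⟩ := hτ x y hx hy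
    have := hmono' x hx y hy _ h0mem _ h1
    rw [h2, hF.zero, sub_zero, zero_sub, abs_neg] at this
    rw [div_mul_eq_mul_div, le_div_iff₀ hm]
    linarith
  have hτc : ContinuousOn (fun q : S2 × S2 => τ q.1 q.2) {q | q.1 ∈ K ∧ dist q.2 q.1 < ε} := by
    intro q0 hq0
    obtain ⟨h1, h2⟩ := hτ q0.1 q0.2 hq0.1 hq0.2
    have hG : Continuous fun q : S2 × S2 => |(inner ℝ (V q.1) (φ (τ q0.1 q0.2) q.2 : E3) : ℝ)| :=
      ((hF.continuous_V.comp continuous_fst).inner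
        (continuous_subtype_val.comp ((hF.cont_x _).comp continuous_snd))).abs
    have hG0 : Tendsto (fun q : S2 × S2 => 2 / m *
        |(inner ℝ (V q.1) (φ (τ q0.1 q0.2) q.2 : E3) : ℝ)|)
        (𝓝[{q | q.1 ∈ K ∧ dist q.2 q.1 < ε}] q0) (𝓝 0) := by
      have := ((hG.const_mul (2 / m)).tendsto q0).mono_left
        (nhdsWithin_le_nhds (s := {q | q.1 ∈ K ∧ dist q.2 q.1 < ε}))
      simpa [h2] using this
    rw [ContinuousWithinAt, tendsto_iff_dist_tendsto_zero]
    refine squeeze_zero' (Eventually.of_forall fun _ => dist_nonneg) ?_ hG0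
    filter_upwards [self_mem_nhdsWithin] with q hq
    obtain ⟨h3, h4⟩ := hτ q.1 q.2 hq.1 hq.2
    have := hmono' q.1 hq.1 q.2 hq.2 _ h1 _ h3
    rw [h4, zero_sub, abs_neg] at this
    rw [Real.dist_eq, div_mul_eq_mul_div, le_div_iff₀ hm]
    linarith
  refine ⟨ε, 2 / m, τ, fun x y => inner ℝ (N x) (φ (τ x y) y : E3) /
    (inner ℝ (x : E3) (φ (τ x y) y : E3) * ‖N x‖ ^ 2), hε0, ?_, hle, ?_, fun _ _ _ _ => rfl, ?_,
    fun x hx y hy => hinner _ _ (hτd x hx y hy), ?_⟩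
  · intro x hx y hy
    have := abs_le.2 (hτ x y hx hy).1
    linarith
  · intro x hx y hy
    exact (hN.gam_eq (hF.tan x) (hVK x hx) _ (hτ x y hx hy).2
      (by linarith [hinner _ _ (hτd x hx y hy)])).symm
  · intro x hx r hr
    have h0 : τ x (gam N x r) = 0 := by
      have := hle x hx _ hr
      rw [hN.inner_V_gam x (hF.inner_V x)] at this
      simpa using this
    have h1 : ‖N x‖ ≠ 0 := by rw [hN.norm]; exact norm_ne_zero_iff.2 (hVK x hx)
    have h2 := hN.one_le_norm x r
    simp only [h0, hF.zero]
    rw [hN.inner_N_gam, hN.inner_x_gam]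
    field_simp
  · have hz : ContinuousOn (fun q : S2 × S2 => (φ (τ q.1 q.2) q.2 : E3))
        {q | q.1 ∈ K ∧ dist q.2 q.1 < ε} :=
      (continuous_subtype_val.comp hF.cont).comp_continuousOn (hτc.prodMk continuousOn_snd)
    have hNc : ContinuousOn (fun q : S2 × S2 => N q.1) {q | q.1 ∈ K ∧ dist q.2 q.1 < ε} :=
      (hN.cont.comp continuous_fst).continuousOn
    have hxc : ContinuousOn (fun q : S2 × S2 => (q.1 : E3)) {q | q.1 ∈ K ∧ dist q.2 q.1 < ε} :=
      (continuous_subtype_val.comp continuous_fst).continuousOn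
    refine (hNc.inner hz).div ((hxc.inner hz).mul (hNc.norm.pow 2)) ?_
    intro q hq
    have h1 : ‖N q.1‖ ≠ 0 := by rw [hN.norm]; exact norm_ne_zero_iff.2 (hVK _ hq.1)
    have h2 := hinner _ _ (hτd q.1 hq.1 q.2 hq.2)
    exact mul_ne_zero (by linarith) (pow_ne_zero 2 h1)

/-! ### Return maps of periodic orbits -/

/-- If the first return map along a periodic orbit contracts the transversal, which is read off
from the normal component of `D`, the derivative of `φ S`, then an invariant function is constant
on the transversal near the orbit: it takes the same value along the iterates of the return map. -/
lemma periodic_return {φ : ℝ → S2 → S2} {V N : S2 → E3} (hF : IsSphereFlow φ V)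
    (hN : IsNormalField V N) {a : S2} (ha : V a ≠ 0) {S : ℝ} (hS : φ S a = a) {D : E3 →L[ℝ] E3}
    (hD : HasFDerivAt (fun y : E3 => (φ S (nrm y) : E3)) D a)
    (hDN : |(inner ℝ (N a) (D (N a)) : ℝ)| ≤ 1 / 2 * ‖N a‖ ^ 2)
    {f : S2 → ℝ} (hf : Continuous f) (hfi : ∀ (t : ℝ) (x : S2), f (φ t x) = f x) :
    ∃ r0 > 0, ∀ r, |r| ≤ r0 → f (gam N a r) = f a := by
  obtain ⟨ε, C, τ, U, hbox⟩ := exists_box hF hN (isCompact_singleton (x := a))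
    (by simpa using ha)
  obtain ⟨L, hL⟩ := hF.lip
  obtain ⟨B, hB1, hB⟩ := hF.exists_bound
  obtain ⟨L', hL'0, hL'⟩ := hF.exists_dist_le
  have hn : 0 < ‖N a‖ := by rw [hN.norm]; exact norm_pos_iff.2 ha
  have hmem : a ∈ ({a} : Set S2) := rfl
  have hL0 : (0 : ℝ) ≤ L := L.2
  obtain ⟨M, hM0, hM⟩ : ∃ M : ℝ, 0 ≤ M ∧ ∀ r, dist (φ S (gam N a r)) a ≤ M * |r| := by
    refine ⟨2 * ‖N a‖ * Real.exp (L' * |S|), by positivity, fun r => ?_⟩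
    calc dist (φ S (gam N a r)) a = dist (φ S (gam N a r)) (φ S a) := by rw [hS]
      _ ≤ dist (gam N a r) a * Real.exp (L' * |S|) := hL' _ _ _
      _ ≤ 2 * (|r| * ‖N a‖) * Real.exp (L' * |S|) := by gcongr; exact hN.dist_gam_le a r
      _ = _ := by ring
  have hτ : ∀ r, dist (φ S (gam N a r)) a < ε →
      |τ a (φ S (gam N a r))| ≤ |C| * (B * M) * |r| := by
    intro r hr
    refine (hbox.tau_le a hmem _ hr).trans ?_
    have h1 : (inner ℝ (V a) (φ S (gam N a r) : E3) : ℝ) =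
        inner ℝ (V a) ((φ S (gam N a r) : E3) - a) := by
      rw [inner_sub_right, hF.inner_V, sub_zero]
    have h2 : |(inner ℝ (V a) (φ S (gam N a r) : E3) : ℝ)| ≤ B * (M * |r|) := by
      rw [h1]
      refine (abs_real_inner_le_norm _ _).trans ?_
      rw [← dist_eq_norm, ← Subtype.dist_eq]
      gcongr
      · exact hB a
      · exact hM r
    calc C * |(inner ℝ (V a) (φ S (gam N a r) : E3) : ℝ)|
        ≤ |C| * (B * (M * |r|)) := by gcongr; exact le_abs_self C
      _ = _ := by ring
  set M1 := |C| * (B * M) with hM1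
  have hM10 : 0 ≤ M1 := by positivity
  -- first order expansion of the return point
  have hder : HasDerivAt (fun r : ℝ => (φ S (gam N a r) : E3)) (D (N a)) 0 := by
    have h1 : HasDerivAt (fun r : ℝ => (a : E3) + r • N a) (N a) 0 := by
      simpa using ((hasDerivAt_id (0 : ℝ)).smul_const (N a)).const_add (a : E3)
    have h2 : HasFDerivAt (fun y : E3 => (φ S (nrm y) : E3)) D ((a : E3) + (0 : ℝ) • N a) := by
      simpa using hD
    exact h2.comp_hasDerivAt (0 : ℝ) h1
  have hsmall := (hasDerivAt_iff_isLittleO.1 hder).def (c := ‖N a‖ / 16) (by positivity)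
  simp only [hN.gam_zero, hS, sub_zero] at hsmall
  obtain ⟨η, hη0, hη⟩ := Metric.eventually_nhds_iff.1 hsmall
  set M2 := ‖N a‖ * (L * (B * M1 + M) * M1) with hM2
  have hM20 : 0 ≤ M2 := by positivity
  set M3 := B * M1 + M with hM3
  have hM30 : 0 ≤ M3 := by positivity
  obtain ⟨r0, hr0, hr1, hr2, hr3, hr4⟩ : ∃ r0 : ℝ, 0 < r0 ∧ r0 < η ∧ M * r0 < ε ∧
      M2 * r0 ≤ ‖N a‖ ^ 2 / 16 ∧ M3 * r0 ≤ 1 / 4 := by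
    have hlim : ∀ c d : ℝ, 0 < d → ∀ᶠ r in 𝓝[>] (0 : ℝ), c * r < d := by
      intro c d hd
      have : Tendsto (fun r : ℝ => c * r) (𝓝[>] 0) (𝓝 0) := by
        have h := (continuous_const_mul c).tendsto (0 : ℝ)
        rw [mul_zero] at h
        exact h.mono_left nhdsWithin_le_nhds
      exact this.eventually_lt_const hd
    have hε := hbox.pos
    have hpos : ∀ᶠ r in 𝓝[>] (0 : ℝ), 0 < r := self_mem_nhdsWithin
    obtain ⟨r, h1, h2, h3, h4, h5⟩ := (hpos.and <| (hlim 1 η hη0).and <| (hlim M ε hε).and <| (hlim M2 (‖N a‖ ^ 2 / 16) (by positivity)).and <|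
      hlim M3 (1 / 4) (by norm_num)).exists
    exact ⟨r, h1, by linarith, h3, h4.le, h5.le⟩
  have hclose : ∀ r, |r| ≤ r0 → dist (φ S (gam N a r)) a < ε := fun r hr =>
    (hM r).trans_lt (lt_of_le_of_lt (by gcongr) hr2)
  have hP : ∀ r, |r| ≤ r0 → |U a (φ S (gam N a r))| ≤ 5 / 6 * |r| := by
    intro r hr
    have hc := hclose r hr
    have hτr := hτ r hc
    rw [hbox.U_eq a hmem _ hc]
    set y := φ S (gam N a r) with hy
    set t := τ a y with ht
    have hz1 := hF.norm_sub_le hB hL t y a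
    have hz1' : ‖(φ t y : E3) - y - t • V a‖ ≤ (L * M3 * M1) * |r| ^ 2 := by
      calc _ ≤ L * (B * |t| + dist y a) * |t| := hz1
        _ ≤ L * (B * (M1 * |r|) + M * |r|) * (M1 * |r|) := by gcongr; exact hM r
        _ = _ := by rw [hM3]; ring
    have hy1 : ‖(y : E3) - a - r • D (N a)‖ ≤ ‖N a‖ / 16 * |r| := by
      have := hη (y := r) (by simpa using hr.trans_lt hr1)
      simpa using this
    have hNV : (inner ℝ (N a) (V a) : ℝ) = 0 := by rw [real_inner_comm]; exact hN.orth a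
    have hNa : (inner ℝ (N a) (a : E3) : ℝ) = 0 := by rw [real_inner_comm]; exact hN.tan a
    have hexp : (inner ℝ (N a) (φ t y : E3) : ℝ) = inner ℝ (N a) ((φ t y : E3) - y - t • V a) +
        inner ℝ (N a) ((y : E3) - a - r • D (N a)) + r * inner ℝ (N a) (D (N a)) := by
      simp only [inner_sub_right, inner_smul_right, hNV, hNa]; ring
    have hnum : |(inner ℝ (N a) (φ t y : E3) : ℝ)| ≤ 5 / 8 * ‖N a‖ ^ 2 * |r| := by
      rw [hexp]
      have e1 : |(inner ℝ (N a) ((φ t y : E3) - y - t • V a) : ℝ)| ≤ ‖N a‖ ^ 2 / 16 * |r| := by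
        refine (abs_real_inner_le_norm _ _).trans ?_
        calc _ ≤ ‖N a‖ * ((L * M3 * M1) * |r| ^ 2) := by gcongr
          _ = (M2 * |r|) * |r| := by rw [hM2, hM3]; ring
          _ ≤ (M2 * r0) * |r| := by gcongr
          _ ≤ _ := by gcongr
      have e2 : |(inner ℝ (N a) ((y : E3) - a - r • D (N a)) : ℝ)| ≤ ‖N a‖ ^ 2 / 16 * |r| := by
        refine (abs_real_inner_le_norm _ _).trans ?_
        calc _ ≤ ‖N a‖ * (‖N a‖ / 16 * |r|) := by gcongr
          _ = _ := by ring
      have e3 : |r * (inner ℝ (N a) (D (N a)) : ℝ)| ≤ 1 / 2 * ‖N a‖ ^ 2 * |r| := by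
        rw [abs_mul, mul_comm]; gcongr
      refine (abs_add_le _ _).trans ((add_le_add (abs_add_le _ _) le_rfl).trans ?_)
      linarith
    have hden : 3 / 4 ≤ (inner ℝ (a : E3) (φ t y : E3) : ℝ) := by
      have h1 : (inner ℝ (a : E3) (φ t y : E3) : ℝ) =
          1 + inner ℝ (a : E3) ((φ t y : E3) - a) := by
        rw [inner_sub_right, real_inner_self_eq_norm_sq, S2.norm_coe]; ring
      have h2 := abs_real_inner_le_norm (a : E3) ((φ t y : E3) - a)
      rw [S2.norm_coe, one_mul, ← dist_eq_norm, ← Subtype.dist_eq] at h2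
      have h3 : dist (φ t y) a ≤ 1 / 4 := by
        calc dist (φ t y) a ≤ dist (φ t y) y + dist y a := dist_triangle _ _ _
          _ ≤ B * (M1 * |r|) + M * |r| := by
            gcongr
            · exact (hF.dist_self_le hB t y).trans (by gcongr)
            · exact hM r
          _ = M3 * |r| := by rw [hM3]; ring
          _ ≤ M3 * r0 := by gcongr
          _ ≤ _ := hr4
      linarith [neg_abs_le (inner ℝ (a : E3) ((φ t y : E3) - a) : ℝ)]
    rw [abs_div, abs_of_nonneg (a := inner ℝ (a : E3) (φ t y : E3) * ‖N a‖ ^ 2) (by positivity),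
      div_le_iff₀ (by positivity)]
    refine hnum.trans ?_
    calc 5 / 8 * ‖N a‖ ^ 2 * |r| = 5 / 6 * |r| * (3 / 4 * ‖N a‖ ^ 2) := by ring
      _ ≤ _ := by gcongr
  refine ⟨r0, hr0, fun r hr => ?_⟩
  have hit : ∀ n : ℕ, ∃ rn : ℝ, |rn| ≤ (5 / 6) ^ n * |r| ∧ f (gam N a rn) = f (gam N a r) := by
    intro n
    induction n with
    | zero => exact ⟨r, by simp, rfl⟩
    | succ n ih =>
      obtain ⟨rn, h1, h2⟩ := ih
      have h3 : |rn| ≤ r0 := h1.trans (le_trans (mul_le_of_le_one_left (abs_nonneg r)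
        (pow_le_one₀ (by norm_num) (by norm_num))) hr)
      refine ⟨U a (φ S (gam N a rn)), (hP rn h3).trans ?_, ?_⟩
      · rw [pow_succ]; linarith
      · rw [← hbox.gam_U a hmem _ (hclose rn h3), hfi, hfi, h2]
  choose rn h1 h2 using hit
  have hlim : Tendsto rn atTop (𝓝 0) := by
    refine squeeze_zero_norm (fun n => by simpa using h1 n) ?_
    have := (tendsto_pow_atTop_nhds_zero_of_lt_one (r := (5 / 6 : ℝ)) (by norm_num)
      (by norm_num)).mul_const |r|
    simpa using this
  have hc : Continuous fun s => f (gam N a s) :=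
    hf.comp (hN.continuous_gam.comp (continuous_const.prodMk continuous_id))
  have h3 := (hc.tendsto 0).comp hlim
  simp only [Function.comp_def, h2, hN.gam_zero] at h3
  exact tendsto_nhds_unique tendsto_const_nhds h3

/-! ### Gaps of a level set -/

/-- At the point `k` of the level set `f = c` nearest to a point `y` outside it, one of the two
normal half-circles starting at `k` leaves the level set. -/
lemma exists_free {φ : ℝ → S2 → S2} {V : S2 → E3} (hF : IsSphereFlow φ V)
    {f : S2 → ℝ} (hf : Continuous f) (hfi : ∀ (t : ℝ) (x : S2), f (φ t x) = f x) {c : ℝ}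
    (hV : ∀ x, f x = c → V x ≠ 0) (hne : ∃ x, f x = c) {y : S2} (hy : f y ≠ c) :
    ∃ k N, f k = c ∧ IsNormalField V N ∧ ∃ θ > 0, ∀ r, 0 < r → r ≤ θ → f (gam N k r) ≠ c := by
  have hK : IsCompact {x | f x = c} := (isClosed_eq hf continuous_const).isCompact
  obtain ⟨k, hk, hmax⟩ := hK.exists_isMaxOn hne (f := fun x : S2 => (inner ℝ (x : E3) (y : E3) : ℝ))
    (continuous_subtype_val.inner continuous_const).continuousOn
  have hmax' : ∀ x, f x = c → (inner ℝ (x : E3) (y : E3) : ℝ) ≤ inner ℝ (k : E3) (y : E3) :=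
    fun x hx => hmax hx
  have hk' : f k = c := hk
  -- the orbit of `k` stays in the level set, so the distance to `y` is critical along it
  have hVy : (inner ℝ (V k) (y : E3) : ℝ) = 0 := by
    have h1 : HasDerivAt (fun s => (inner ℝ (φ s k : E3) (y : E3) : ℝ))
        (inner ℝ (V (φ 0 k)) (y : E3)) 0 := by
      have := (hF.deriv k 0).inner ℝ (hasDerivAt_const (0 : ℝ) (y : E3))
      simpa using this
    have h2 : IsLocalMax (fun s => (inner ℝ (φ s k : E3) (y : E3) : ℝ)) 0 :=
      Eventually.of_forall fun s => by
        simp only [hF.zero]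
        exact hmax' _ (by rw [hfi, hk'])
    have := h2.hasDerivAt_eq_zero h1
    rwa [hF.zero] at this
  obtain ⟨N, hN, hNy⟩ : ∃ N, IsNormalField V N ∧ 0 ≤ (inner ℝ (N k) (y : E3) : ℝ) := by
    obtain ⟨N, hN⟩ := exists_normalField hF.continuous_V hF.tan
    rcases le_total 0 (inner ℝ (N k) (y : E3) : ℝ) with h | h
    · exact ⟨N, hN, h⟩
    · exact ⟨_, hN.neg, by simpa using h⟩
  refine ⟨k, N, hk', hN, ?_⟩
  have hVk := hV k hk'
  have hn : 0 < ‖N k‖ := by rw [hN.norm]; exact norm_pos_iff.2 hVk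
  have hexp := hN.expand (hF.tan k) hVk y hVy
  set α : ℝ := inner ℝ (k : E3) (y : E3) with hα
  set β : ℝ := inner ℝ (N k) (y : E3) / ‖N k‖ ^ 2 with hβ
  have hβ0 : 0 ≤ β := by positivity
  have hky : (k : E3) ≠ y := by
    intro h
    have : k = y := Subtype.ext h
    exact hy (this ▸ hk')
  have hα1 : α < 1 := (inner_lt_one_iff_real_of_norm_eq_one (S2.norm_coe k) (S2.norm_coe y)).2 hky
  have hsq : α ^ 2 + β ^ 2 * ‖N k‖ ^ 2 = 1 := by
    have h1 : (inner ℝ (y : E3) (y : E3) : ℝ) = 1 := by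
      rw [real_inner_self_eq_norm_sq, S2.norm_coe]; norm_num
    have h2 : (inner ℝ (y : E3) (y : E3) : ℝ) = α * α + β * inner ℝ (N k) (y : E3) := by
      conv_lhs => rw [hexp]
      rw [inner_add_left, inner_smul_left, inner_smul_left]
      conv_lhs => simp only [conj_trivial]
      rw [← hexp]
    have h3 : (inner ℝ (N k) (y : E3) : ℝ) = β * ‖N k‖ ^ 2 := by rw [hβ]; field_simp
    rw [h3] at h2
    linarith
  have hin : ∀ r, (inner ℝ (gam N k r : E3) (y : E3) : ℝ) =
      ‖(k : E3) + r • N k‖⁻¹ * (α + r * (β * ‖N k‖ ^ 2)) := by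
    intro r
    have h3 : (inner ℝ (N k) (y : E3) : ℝ) = β * ‖N k‖ ^ 2 := by rw [hβ]; field_simp
    rw [hN.coe_gam, inner_smul_left, inner_add_left, inner_smul_left, h3]
    simp [hα]
  have hν : 0 < ‖N k‖ ^ 2 := by positivity
  obtain ⟨θ, hθ, hθβ⟩ : ∃ θ > 0, β = 0 ∨ θ < β := by
    rcases hβ0.eq_or_lt with h | h
    · exact ⟨1, one_pos, Or.inl h.symm⟩
    · exact ⟨β / 2, by linarith, Or.inr (by linarith)⟩
  refine ⟨θ, hθ, fun r hr hrθ hfr => ?_⟩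
  have h1 := hmax' _ hfr
  have hn1 := hN.one_le_norm k r
  have hnsq := hN.norm_add k r
  rw [hin, inv_mul_le_iff₀ (by linarith)] at h1
  set n := ‖(k : E3) + r • N k‖
  have hr2 : 0 < r ^ 2 * ‖N k‖ ^ 2 := by positivity
  have hn2 : 1 < n := by nlinarith
  have hn3 : n ≤ 1 + r ^ 2 * ‖N k‖ ^ 2 := by nlinarith
  rcases hθβ with h | h
  · have : α = -1 := by
      rw [h] at hsq
      have h2 : (α - 1) * (α + 1) = 0 := by linarith
      rcases mul_eq_zero.1 h2 with h3 | h3 <;> linarith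
    rw [this, h] at h1
    linarith
  · have hβp : 0 < β := by linarith
    have h4 : 0 < r * (β * ‖N k‖ ^ 2) := by positivity
    rcases le_total α 0 with h3 | h3
    · nlinarith
    · have h5 : n * α ≤ (1 + r ^ 2 * ‖N k‖ ^ 2) * α := by gcongr
      have h6 : r ^ 2 * ‖N k‖ ^ 2 * α ≤ r ^ 2 * ‖N k‖ ^ 2 * 1 := by gcongr
      have h7 : r * (r * ‖N k‖ ^ 2) < β * (r * ‖N k‖ ^ 2) := by gcongr; linarith
      linarith

/-- Along a non-periodic orbit in the level set `f = c`, the one-sided gaps of the level set become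
thinner than any given width: two passages near an accumulation point lie at different heights,
so the later passage is in the gap above the earlier one, or vice versa. -/
lemma eventually_not_free {φ : ℝ → S2 → S2} {V N : S2 → E3} (hF : IsSphereFlow φ V)
    (hN : IsNormalField V N) {f : S2 → ℝ} (hf : Continuous f)
    (hfi : ∀ (t : ℝ) (x : S2), f (φ t x) = f x) {c : ℝ} {ε C : ℝ} {τ U : S2 → S2 → ℝ}
    (hbox : IsBox φ V N {x | f x = c} ε C τ U) {k : S2} (hk : f k = c)
    (hper : ∀ T > 0, φ T k ≠ k) {θ : ℝ} (hθ : 0 < θ)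
    (hθε : ∀ x r, 0 ≤ r → r ≤ θ → dist (gam N x r) x < ε / 2) :
    ∀ᶠ n : ℕ in atTop, ¬ ∀ r, 0 < r → r ≤ θ → f (gam N (φ n k) r) ≠ c := by
  by_contra hcon
  rw [not_eventually] at hcon
  simp only [not_not] at hcon
  obtain ⟨ψ, hψ, hfree⟩ := extraction_of_frequently_atTop hcon
  have hK : IsCompact {x | f x = c} := (isClosed_eq hf continuous_const).isCompact
  obtain ⟨q, hq, ψ', hψ', hlim⟩ := hK.tendsto_subseq
    (x := fun j => φ (ψ j : ℕ) k) (fun j => by simp [hfi, hk])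
  set b : ℕ → S2 := fun j => φ (ψ (ψ' j) : ℕ) k with hb
  have hlimb : Tendsto b atTop (𝓝 q) := hlim
  have hfreeb : ∀ j r, 0 < r → r ≤ θ → f (gam N (b j) r) ≠ c := fun j => hfree (ψ' j)
  have hε := hbox.pos
  have hUc : ContinuousOn (U q) (ball q ε) :=
    hbox.cont.comp (continuous_const.prodMk continuous_id).continuousOn fun y hy => ⟨hq, hy⟩
  have hclose : ∀ᶠ j in atTop, dist (b j) q < ε / 2 :=
    hlimb.eventually (ball_mem_nhds q (by linarith : 0 < ε / 2))
  have hq0 : dist (gam N q 0) q < ε := by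
    rw [hN.gam_zero, dist_self]; exact hε
  have hqθ : dist (gam N q θ) q < ε := by linarith [hθε q θ hθ.le le_rfl]
  have hu : ∀ᶠ j in atTop, U q (b j) < θ / 2 := by
    have h1 : ContinuousAt (U q) q := hUc.continuousAt (ball_mem_nhds q hε)
    have h2 := h1.tendsto.comp hlimb
    have h3 := hbox.U_gam q hq 0 hq0
    rw [hN.gam_zero] at h3
    rw [h3] at h2
    exact h2.eventually_lt_const (by linarith)
  have hv : ∀ᶠ j in atTop, θ / 2 < U q (gam N (b j) θ) := by
    have h1 : ContinuousAt (U q) (gam N q θ) :=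
      hUc.continuousAt (isOpen_ball.mem_nhds hqθ)
    have h0 : Tendsto (fun j => gam N (b j) θ) atTop (𝓝 (gam N q θ)) :=
      ((hN.continuous_gam.comp (continuous_id.prodMk continuous_const)).tendsto q).comp hlimb
    have h2 := h1.tendsto.comp h0
    rw [hbox.U_gam q hq θ hqθ] at h2
    exact h2.eventually_const_lt (by linarith)
  have key : ∀ i j, dist (b i) q < ε / 2 → dist (b j) q < ε / 2 → U q (b j) < θ / 2 →
      θ / 2 < U q (gam N (b i) θ) → ¬ U q (b i) < U q (b j) := by
    intro i j hi hj hj2 hi2 hlt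
    have hd : ∀ r ∈ Icc 0 θ, dist (gam N (b i) r) q < ε := by
      intro r hr
      have := hθε (b i) r hr.1 hr.2
      linarith [dist_triangle (gam N (b i) r) (b i) q]
    have hc : ContinuousOn (fun r => U q (gam N (b i) r)) (Icc 0 θ) :=
      hUc.comp (hN.continuous_gam.comp (continuous_const.prodMk continuous_id)).continuousOn
        fun r hr => hd r hr
    obtain ⟨r, hr, hrU⟩ := intermediate_value_Icc hθ.le hc
      (show U q (b j) ∈ Icc _ _ from ⟨by simp only [hN.gam_zero]; exact hlt.le, by linarith⟩)
    simp only at hrU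
    have hr0 : r ≠ 0 := by
      rintro rfl
      rw [hN.gam_zero] at hrU
      linarith
    refine hfreeb i r (lt_of_le_of_ne hr.1 hr0.symm) hr.2 ?_
    have h1 := hbox.gam_U q hq _ (hd r hr)
    have h2 := hbox.gam_U q hq (b j) (by linarith)
    rw [hrU, ← h2] at h1
    rw [← hfi (τ q (gam N (b i) r)), h1, hfi, hb]
    simp [hfi, hk]
  obtain ⟨J, hJ⟩ := eventually_atTop.1 (hclose.and (hu.and hv))
  obtain ⟨h1, h2, h3⟩ := hJ J le_rfl
  obtain ⟨h1', h2', h3'⟩ := hJ (J + 1) (by omega)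
  have heq : U q (b J) = U q (b (J + 1)) :=
    le_antisymm (not_lt.1 (key _ _ h1' h1 h2 h3')) (not_lt.1 (key _ _ h1 h1' h2' h3))
  have e1 := hbox.gam_U q hq (b J) (by linarith)
  have e2 := hbox.gam_U q hq (b (J + 1)) (by linarith)
  rw [heq, ← e2] at e1
  have l1 := abs_lt.1 (hbox.tau_lt q hq (b J) (by linarith))
  have l2 := abs_lt.1 (hbox.tau_lt q hq (b (J + 1)) (by linarith))
  have hlt : (ψ (ψ' J) : ℝ) + 1 ≤ ψ (ψ' (J + 1)) := by
    exact_mod_cast hψ (hψ' (Nat.lt_succ_self J))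
  simp only [hb, ← hF.add] at e1
  refine hper (-(τ q (b J) + ψ (ψ' J)) + (τ q (b (J + 1)) + ψ (ψ' (J + 1)))) (by linarith) ?_
  rw [hF.add, hb, ← e1, hF.neg_cancel]

/-- One-sided gaps of the level set `f = c` are carried by the time-one map. -/
lemma free_step {φ : ℝ → S2 → S2} {V N : S2 → E3} (hF : IsSphereFlow φ V)
    (hN : IsNormalField V N) {f : S2 → ℝ}
    (hfi : ∀ (t : ℝ) (x : S2), f (φ t x) = f x) {c : ℝ} {ε C : ℝ} {τ U : S2 → S2 → ℝ}
    (hbox : IsBox φ V N {x | f x = c} ε C τ U) {x : S2} (hx : f x = c) {θ : ℝ} (hθ : 0 < θ)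
    (hθε : ∀ h ∈ Icc (0 : ℝ) 1, ∀ r ∈ Icc 0 θ, dist (φ h (gam N x r)) (φ h x) < ε)
    (hfree : ∀ r, 0 < r → r ≤ θ → f (gam N x r) ≠ c) :
    ∃ θ' > 0, f (gam N (φ 1 x) θ') = f (gam N x θ) ∧
      ∀ r, 0 < r → r ≤ θ' → f (gam N (φ 1 x) r) ≠ c := by
  have hε := hbox.pos
  have hmem : ∀ h, φ h x ∈ {x | f x = c} := fun h => by simp [hfi, hx]
  have hfU : ∀ h ∈ Icc (0 : ℝ) 1, ∀ r ∈ Icc 0 θ,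
      f (gam N (φ h x) (U (φ h x) (φ h (gam N x r)))) = f (gam N x r) := by
    intro h hh r hr
    rw [← hbox.gam_U _ (hmem h) _ (hθε h hh r hr), hfi, hfi]
  have hne : ∀ h ∈ Icc (0 : ℝ) 1, U (φ h x) (φ h (gam N x θ)) ≠ 0 := by
    intro h hh h0
    have := hfU h hh θ ⟨hθ.le, le_rfl⟩
    rw [h0, hN.gam_zero, hfi, hx] at this
    exact hfree θ hθ le_rfl this.symm
  have hw0 : U (φ 0 x) (φ 0 (gam N x θ)) = θ := by
    have := hθε 0 ⟨le_rfl, zero_le_one⟩ θ ⟨hθ.le, le_rfl⟩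
    rw [hF.zero, hF.zero] at this ⊢
    exact hbox.U_gam x hx θ this
  have hpos : 0 < U (φ 1 x) (φ 1 (gam N x θ)) := by
    by_contra hcon
    have hc : ContinuousOn (fun h => U (φ h x) (φ h (gam N x θ))) (Icc 0 1) :=
      hbox.cont.comp ((hF.cont_t x).prodMk (hF.cont_t _)).continuousOn
        fun h hh => ⟨hmem h, hθε h hh θ ⟨hθ.le, le_rfl⟩⟩
    obtain ⟨h, hh, h0⟩ := intermediate_value_Icc' zero_le_one hc
      (show (0 : ℝ) ∈ Icc _ _ from ⟨not_lt.1 hcon, by simp only [hw0]; exact hθ.le⟩)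
    exact hne h hh h0
  have h1 : (1 : ℝ) ∈ Icc (0 : ℝ) 1 := ⟨zero_le_one, le_rfl⟩
  refine ⟨_, hpos, hfU 1 h1 θ ⟨hθ.le, le_rfl⟩, fun r' hr' hr'θ => ?_⟩
  have hc : ContinuousOn (fun r => U (φ 1 x) (φ 1 (gam N x r))) (Icc 0 θ) :=
    hbox.cont.comp (continuous_const.prodMk ((hF.cont_x 1).comp (hN.continuous_gam.comp
      (continuous_const.prodMk continuous_id)))).continuousOn fun r hr => ⟨hmem 1, hθε 1 h1 r hr⟩
  have hw1 : U (φ 1 x) (φ 1 (gam N x 0)) = 0 := by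
    have := hbox.U_gam (φ 1 x) (hmem 1) 0 (by rw [hN.gam_zero, dist_self]; exact hε)
    rwa [hN.gam_zero] at this ⊢
  obtain ⟨r, hr, hrU⟩ := intermediate_value_Icc hθ.le hc
    (show r' ∈ Icc _ _ from ⟨by simp only [hw1]; exact hr'.le, hr'θ⟩)
  simp only at hrU
  have hr0 : r ≠ 0 := by
    rintro rfl
    rw [hw1] at hrU
    linarith
  rw [← hrU, hfU 1 h1 r hr]
  exact hfree r (lt_of_le_of_ne hr.1 hr0.symm) hr.2

/-- A level set without singularities is the whole sphere as soon as, at each of its periodic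
points, it contains a neighbourhood of that point in the transversal. -/
lemma level_set_eq_univ {φ : ℝ → S2 → S2} {V : S2 → E3} (hF : IsSphereFlow φ V)
    {f : S2 → ℝ} (hf : Continuous f) (hfi : ∀ (t : ℝ) (x : S2), f (φ t x) = f x) {c : ℝ}
    (hV : ∀ x, f x = c → V x ≠ 0)
    (hper : ∀ p, f p = c → (∃ T > 0, φ T p = p) → ∀ N, IsNormalField V N →
      ∃ r0 > 0, ∀ r, |r| ≤ r0 → f (gam N p r) = f p)
    (hne : ∃ x, f x = c) (y : S2) : f y = c := by
  by_contra hy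
  obtain ⟨k, N, hk, hN, θ0, hθ0, hfree⟩ := exists_free hF hf hfi hV hne hy
  by_cases hkper : ∃ T > 0, φ T k = k
  · obtain ⟨r0, hr0, h⟩ := hper k hk hkper N hN
    have hm : 0 < min r0 θ0 := lt_min hr0 hθ0
    refine hfree _ hm (min_le_right _ _) ?_
    rw [h _ (by rw [abs_of_pos hm]; exact min_le_left _ _), hk]
  have hkper' : ∀ T > 0, φ T k ≠ k := fun T hT h => hkper ⟨T, hT, h⟩
  have hK : IsCompact {x | f x = c} := (isClosed_eq hf continuous_const).isCompact
  obtain ⟨ε, C, τ, U, hbox⟩ := exists_box hF hN hK hV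
  obtain ⟨B, hB1, hB⟩ := hF.exists_bound
  obtain ⟨L, hL0, hL⟩ := hF.exists_dist_le
  have hε := hbox.pos
  have hgam : ∀ x r, 0 ≤ r → dist (gam N x r) x ≤ 2 * B * r := by
    intro x r hr
    refine (hN.dist_gam_le x r).trans ?_
    rw [abs_of_nonneg hr, hN.norm]
    calc 2 * (r * ‖V x‖) ≤ 2 * (r * B) := by gcongr; exact hB x
      _ = _ := by ring
  obtain ⟨ε', hε'0, hε'1, hε'2⟩ : ∃ ε' > 0, 2 * B * ε' < ε / 2 ∧
      2 * B * ε' * Real.exp L < ε := by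
    refine ⟨ε / (8 * B * Real.exp L), by positivity, ?_, ?_⟩
    · have h1 : 1 ≤ Real.exp L := Real.one_le_exp hL0
      rw [mul_div_assoc', div_lt_iff₀ (by positivity)]
      have : 0 < B * ε := by positivity
      nlinarith
    · have : 2 * B * (ε / (8 * B * Real.exp L)) * Real.exp L = ε / 4 := by field_simp; norm_num
      rw [this]; linarith
  have hA : ∀ θ, 0 < θ → θ ≤ ε' →
      ∀ᶠ n : ℕ in atTop, ¬ ∀ r, 0 < r → r ≤ θ → f (gam N (φ n k) r) ≠ c := by
    intro θ hθ hθε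
    refine eventually_not_free hF hN hf hfi hbox hk hkper' hθ fun x r hr hrθ => ?_
    refine (hgam x r hr).trans_lt (lt_of_le_of_lt ?_ hε'1)
    gcongr
    linarith
  have hstep : ∀ (n : ℕ) θ, 0 < θ → θ ≤ ε' →
      (∀ r, 0 < r → r ≤ θ → f (gam N (φ n k) r) ≠ c) →
      ∃ θ' > 0, f (gam N (φ (n + 1 : ℕ) k) θ') = f (gam N (φ n k) θ) ∧
        ∀ r, 0 < r → r ≤ θ' → f (gam N (φ (n + 1 : ℕ) k) r) ≠ c := by
    intro n θ hθ hθε hfr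
    have h1 : φ (n + 1 : ℕ) k = φ 1 (φ n k) := by
      rw [← hF.add]; push_cast; rw [add_comm]
    rw [h1]
    refine free_step hF hN hfi hbox (by rw [hfi, hk]) hθ (fun h hh r hr => ?_) hfr
    refine (hL _ _ _).trans_lt (lt_of_le_of_lt ?_ hε'2)
    rw [abs_of_nonneg hh.1]
    have hr2 : r ≤ ε' := hr.2.trans hθε
    have : L * h ≤ L := mul_le_of_le_one_right hL0 hh.2
    gcongr
    exact (hgam _ r hr.1).trans (by gcongr)
  -- every point of the orbit borders a gap
  have hgap : ∀ n : ℕ, ∃ θ > 0, ∀ r, 0 < r → r ≤ θ → f (gam N (φ n k) r) ≠ c := by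
    intro n
    induction n with
    | zero => exact ⟨θ0, hθ0, by simpa [hF.zero] using hfree⟩
    | succ n ih =>
      obtain ⟨θ, hθ, h⟩ := ih
      obtain ⟨θ', hθ', -, h'⟩ := hstep n (min θ ε') (lt_min hθ hε'0) (min_le_right _ _)
        fun r hr hrθ => h r hr (hrθ.trans (min_le_left _ _))
      exact ⟨θ', hθ', h'⟩
  obtain ⟨n0, hn0⟩ := eventually_atTop.1 (hA ε' hε'0 le_rfl)
  obtain ⟨θ1, hθ1, hfree1⟩ := hgap n0
  have hlt : ∀ (n : ℕ) θ θ', (¬ ∀ r, 0 < r → r ≤ θ' → f (gam N (φ n k) r) ≠ c) →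
      (∀ r, 0 < r → r ≤ θ → f (gam N (φ n k) r) ≠ c) → θ < θ' := by
    intro n θ θ' h1 h2
    by_contra h3
    exact h1 fun r hr hrθ => h2 r hr (by linarith)
  -- from time `n0` on the gaps are so thin that the far end of the gap can be followed
  have htrack : ∀ j : ℕ, ∃ θ > 0, f (gam N (φ (n0 + j : ℕ) k) θ) = f (gam N (φ n0 k) θ1) ∧
      ∀ r, 0 < r → r ≤ θ → f (gam N (φ (n0 + j : ℕ) k) r) ≠ c := by
    intro j
    induction j with
    | zero => exact ⟨θ1, hθ1, rfl, hfree1⟩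
    | succ j ih =>
      obtain ⟨θ, hθ, he, h⟩ := ih
      obtain ⟨θ', hθ', he', h'⟩ := hstep (n0 + j) θ hθ
        (hlt _ _ _ (hn0 (n0 + j) (by omega)) h).le h
      exact ⟨θ', hθ', he'.trans he, h'⟩
  refine hfree1 θ1 hθ1 le_rfl ?_
  have huc := CompactSpace.uniformContinuous_of_continuous hf
  refine eq_of_forall_dist_le fun η hη => ?_
  obtain ⟨δ, hδ, hδη⟩ := Metric.uniformContinuous_iff.1 huc η hη
  have hm : 0 < min ε' (δ / (4 * B)) := by positivity
  obtain ⟨n1, hn1⟩ := eventually_atTop.1 (hA _ hm (min_le_left _ _))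
  obtain ⟨θ, hθ, he, h⟩ := htrack n1
  have hθlt := hlt _ _ _ (hn1 (n0 + n1) (by omega)) h
  have hθ2 : θ < δ / (4 * B) := hθlt.trans_le (min_le_right _ _)
  rw [lt_div_iff₀ (by positivity)] at hθ2
  have hd := hgam (φ (n0 + n1 : ℕ) k) θ hθ.le
  have := hδη (a := gam N (φ (n0 + n1 : ℕ) k) θ) (b := φ (n0 + n1 : ℕ) k) (by linarith)
  rw [he, hfi, hk] at this
  exact this.le

/-! ### Hyperbolic orbits -/

/-- The differential of the time-`t` map at `x`, on the model space of the tangent spaces. -/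
def dfl (φ : ℝ → S2 → S2) (t : ℝ) (x : S2) : E2 →L[ℝ] E2 := mfderiv (𝓡 2) (𝓡 2) (φ t) x

lemma dfl_add {φ : ℝ → S2 → S2} {V : S2 → E3} (hF : IsSphereFlow φ V)
    (hφ : ∀ t, MDifferentiable (𝓡 2) (𝓡 2) (φ t)) (s t : ℝ) (x : S2) (w : E2) :
    dfl φ (s + t) x w = dfl φ s (φ t x) (dfl φ t x w) := by
  have h1 : φ (s + t) = φ s ∘ φ t := funext fun y => hF.add s t y
  have h2 := mfderiv_comp x (hφ s (φ t x)) (hφ t x)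
  rw [← h1] at h2
  have h3 : dfl φ (s + t) x = (dfl φ s (φ t x)).comp (dfl φ t x) := h2
  rw [h3]; rfl

lemma dfl_zero {φ : ℝ → S2 → S2} {V : S2 → E3} (hF : IsSphereFlow φ V) (x : S2) (w : E2) :
    dfl φ 0 x w = w := by
  have h1 : φ 0 = id := funext fun y => hF.zero y
  have h2 : dfl φ 0 x = ContinuousLinearMap.id ℝ E2 := by
    rw [dfl, h1]; exact mfderiv_id
  rw [h2]; rfl

/-- Grönwall's bound for the differential of the flow. -/
lemma exists_norm_dfl_le {φ : ℝ → S2 → S2} {V : S2 → E3} (hF : IsSphereFlow φ V)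
    (hφ : ∀ t, MDifferentiable (𝓡 2) (𝓡 2) (φ t)) :
    ∃ L : ℝ, 0 ≤ L ∧ ∀ t x w, ‖dfl φ t x w‖ ≤ 2 * Real.exp (L * |t|) * ‖w‖ := by
  obtain ⟨L, hL0, hL⟩ := hF.exists_dist_le
  refine ⟨L, hL0, fun t x w => ?_⟩
  obtain ⟨D, hD, hDd⟩ := exists_ambient_deriv (hφ t) x
  have h1 : ‖D‖ ≤ 2 * Real.exp (L * |t|) := by
    refine hD.le_of_lip' (by positivity) ?_
    have hx0 : (x : E3) ≠ 0 := ne_zero_of_mem_unit_sphere x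
    filter_upwards [isOpen_compl_singleton.mem_nhds hx0] with y hy
    have hy0 : y ≠ 0 := hy
    have e1 := hL t (nrm y) (nrm x)
    rw [Subtype.dist_eq, Subtype.dist_eq, dist_eq_norm, dist_eq_norm] at e1
    refine e1.trans ?_
    have hn : ‖y‖ ≠ 0 := norm_ne_zero_iff.2 hy0
    have e2 : ‖(nrm y : E3) - y‖ ≤ ‖y - x‖ := by
      have e3 : (nrm y : E3) - y = (‖y‖⁻¹ - 1) • y := by rw [coe_nrm hy0, sub_smul, one_smul]
      have e4 : ‖(‖y‖⁻¹ - 1) • y‖ = |‖(x : E3)‖ - ‖y‖| := by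
        rw [norm_smul, Real.norm_eq_abs, S2.norm_coe]
        conv_lhs => rw [← abs_norm y, ← abs_mul, abs_norm]
        congr 1
        field_simp
      rw [e3, e4, abs_sub_comm]
      exact abs_norm_sub_norm_le _ _
    have e5 : ‖(nrm y : E3) - nrm (x : E3)‖ ≤ 2 * ‖y - x‖ := by
      rw [nrm_coe]
      calc ‖(nrm y : E3) - x‖ = ‖((nrm y : E3) - y) + (y - x)‖ := by simp
        _ ≤ _ := norm_add_le _ _
        _ ≤ _ := by linarith
    calc _ ≤ 2 * ‖y - x‖ * Real.exp (L * |t|) := by gcongr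
      _ = _ := by ring
  have h2 : ‖dfl φ t x w‖ = ‖D (dI x w)‖ := by
    rw [hDd w, norm_dI]; rfl
  rw [h2]
  calc ‖D (dI x w)‖ ≤ ‖D‖ * ‖dI x w‖ := D.le_opNorm _
    _ ≤ _ := by rw [norm_dI]; gcongr

/-- The flow carries its own velocity field along. -/
lemma ambient_deriv_V {φ : ℝ → S2 → S2} {V : S2 → E3} (hF : IsSphereFlow φ V) {t : ℝ} {x : S2}
    {D : E3 →L[ℝ] E3} (hD : HasFDerivAt (fun y : E3 => (φ t (nrm y) : E3)) D x) :
    D (V x) = V (φ t x) := by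
  have h1 := hF.deriv x 0
  rw [hF.zero] at h1
  have hD' : HasFDerivAt (fun y : E3 => (φ t (nrm y) : E3)) D (φ 0 x : E3) := by
    rw [hF.zero]; exact hD
  have h2 := hD'.comp_hasDerivAt (0 : ℝ) h1
  have h3 := hF.deriv (φ t x) 0
  rw [hF.zero] at h3
  refine h2.unique (h3.congr_of_eventuallyEq (Eventually.of_forall fun s => ?_))
  simp only [Function.comp_def, nrm_coe]
  rw [← hF.add, add_comm, hF.add]

/-- Vectors in a family of subspaces along a periodic orbit which is contracted by the time-`T`
map (where `T` may be negative) are contracted as strongly as desired by a multiple of the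
period: compare that multiple with `k * T`, the remaining time being at most one period. -/
lemma exists_period_contraction {φ : ℝ → S2 → S2} {V : S2 → E3} (hF : IsSphereFlow φ V)
    (hφ : ∀ t, MDifferentiable (𝓡 2) (𝓡 2) (φ t)) {p : S2} {T0 : ℝ} (hT0 : 0 < T0)
    (hp : φ T0 p = p) {Es : ℝ → Submodule ℝ E2} {T : ℝ}
    (hinv : ∀ s t : ℝ, ∀ v ∈ Es t, dfl φ s (φ t p) v ∈ Es (t + s))
    (hcon : ∀ t : ℝ, ∀ v ∈ Es t, ‖dfl φ T (φ t p) v‖ ≤ 1 / 2 * ‖v‖)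
    {v : E2} (hv : v ∈ Es 0) {η : ℝ} (hη : 0 < η) :
    ∃ S, φ S p = p ∧ ‖dfl φ S p v‖ ≤ η := by
  obtain ⟨L, hL0, hL⟩ := exists_norm_dfl_le hF hφ
  have hk : ∀ k : ℕ, ‖dfl φ (k * T) p v‖ ≤ (1 / 2) ^ k * ‖v‖ ∧
      dfl φ (k * T) p v ∈ Es (k * T) := by
    intro k
    induction k with
    | zero => simpa [dfl_zero hF] using hv
    | succ k ih =>
      have h1 : ((k + 1 : ℕ) : ℝ) * T = T + k * T := by push_cast; ring
      rw [h1, dfl_add hF hφ]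
      refine ⟨(hcon _ _ ih.2).trans ?_, ?_⟩
      · rw [pow_succ]; linarith [ih.1]
      · rw [add_comm]; exact hinv _ _ _ ih.2
  have hperiodic : Function.Periodic (fun s => φ s p) T0 := fun s => by
    change φ (s + T0) p = φ s p
    rw [hF.add, hp]
  obtain ⟨k, hkη⟩ : ∃ k : ℕ, 2 * Real.exp (L * T0) * ((1 / 2) ^ k * ‖v‖) < η := by
    have h1 := ((tendsto_pow_atTop_nhds_zero_of_lt_one (r := (1 / 2 : ℝ)) (by norm_num)
      (by norm_num)).mul_const ‖v‖).const_mul (2 * Real.exp (L * T0))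
    rw [zero_mul, mul_zero] at h1
    exact (h1.eventually_lt_const hη).exists
  set n : ℤ := ⌈k * T / T0⌉ with hn
  refine ⟨n * T0, ?_, ?_⟩
  · have := hperiodic.int_mul_eq n
    simpa [hF.zero] using this
  · have h1 : (n : ℝ) * T0 = (n * T0 - k * T) + k * T := by ring
    rw [h1, dfl_add hF hφ]
    refine ((hL _ _ _).trans ?_).trans hkη.le
    have h2 : |n * T0 - k * T| ≤ T0 := by
      have e1 : k * T / T0 ≤ n := Int.le_ceil _
      have e2 : (n : ℝ) < k * T / T0 + 1 := Int.ceil_lt_add_one _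
      rw [div_le_iff₀ hT0] at e1
      rw [div_add_one hT0.ne', lt_div_iff₀ hT0] at e2
      rw [abs_le]; constructor <;> linarith
    gcongr
    exact (hk k).1

/-- If the differentials at return times contract some vector transverse to the field as strongly
as desired, the return map contracts the transversal. -/
lemma periodic_const {φ : ℝ → S2 → S2} {V N : S2 → E3} (hF : IsSphereFlow φ V)
    (hφ : ∀ t, MDifferentiable (𝓡 2) (𝓡 2) (φ t)) (hN : IsNormalField V N) {p : S2} (hp : V p ≠ 0)
    {v : E2} (hv : ∀ β : ℝ, dI p v ≠ β • V p)
    (hcon : ∀ η > 0, ∃ S, φ S p = p ∧ ‖dfl φ S p v‖ ≤ η)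
    {f : S2 → ℝ} (hf : Continuous f) (hfi : ∀ (t : ℝ) (x : S2), f (φ t x) = f x) :
    ∃ r0 > 0, ∀ r, |r| ≤ r0 → f (gam N p r) = f p := by
  have hVn : 0 < ‖V p‖ := norm_pos_iff.2 hp
  have hn : 0 < ‖N p‖ := by rw [hN.norm]; exact hVn
  set β : ℝ := inner ℝ (V p) (dI p v) / ‖V p‖ ^ 2 with hβ
  set z : E3 := dI p v - β • V p with hz
  have hzV : inner ℝ (V p) z = 0 := by
    rw [hz, inner_sub_right, inner_smul_right, real_inner_self_eq_norm_sq, hβ]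
    field_simp
    ring
  have hzp : inner ℝ (p : E3) z = 0 := by
    rw [hz, inner_sub_right, inner_smul_right, inner_dI, hF.tan]; simp
  have hexp := hN.expand (hF.tan p) hp z hzV
  rw [hzp, zero_smul, zero_add] at hexp
  set α : ℝ := inner ℝ (N p) z / ‖N p‖ ^ 2 with hα
  have hα0 : α ≠ 0 := by
    intro h
    rw [h, zero_smul] at hexp
    exact hv β (sub_eq_zero.1 hexp)
  have hαp : 0 < |α| := abs_pos.2 hα0
  obtain ⟨S, hS, hSv⟩ := hcon (1 / 2 * |α| * ‖N p‖) (by positivity)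
  obtain ⟨D, hD, hDd⟩ := exists_ambient_deriv (hφ S) p
  refine periodic_return hF hN hp hS hD ?_ hf hfi
  have hDV := ambient_deriv_V hF hD
  rw [hS] at hDV
  have hDN : α * inner ℝ (N p) (D (N p)) = inner ℝ (N p) (D (dI p v)) := by
    have h1 : dI p v = α • N p + β • V p := by rw [← hexp, hz]; abel
    have h2 : (inner ℝ (N p) (V p) : ℝ) = 0 := by rw [real_inner_comm]; exact hN.orth p
    rw [h1, map_add, map_smul, map_smul, hDV, inner_add_right, inner_smul_right, inner_smul_right,
      h2]
    ring
  have h3 : ‖D (dI p v)‖ ≤ 1 / 2 * |α| * ‖N p‖ := by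
    rw [hDd v, norm_dI]; exact hSv
  have h4 : |α| * |(inner ℝ (N p) (D (N p)) : ℝ)| ≤ |α| * (1 / 2 * ‖N p‖ ^ 2) := by
    rw [← abs_mul, hDN]
    refine (abs_real_inner_le_norm _ _).trans ?_
    calc ‖N p‖ * ‖D (dI p v)‖ ≤ ‖N p‖ * (1 / 2 * |α| * ‖N p‖) := by gcongr
      _ = _ := by ring
  exact le_of_mul_le_mul_left h4 hαp

lemma amb_eq_zero {X : (x : S2) → TangentSpace (𝓡 2) x} {x : S2} : amb X x = 0 ↔ X x = 0 := by
  let X0 : E2 := X x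
  change dI x X0 = 0 ↔ X0 = 0
  rw [← norm_eq_zero, norm_dI, norm_eq_zero]

/-- Near a hyperbolic periodic orbit an invariant function is constant on the transversal. The
stable or the unstable space is not contained in the flow direction, by dimension. -/
lemma hyperbolic_periodic_const {X : (x : S2) → TangentSpace (𝓡 2) x} {φ : ℝ → S2 → S2}
    (hF : IsSphereFlow φ (amb X)) (hφ : ∀ t, MDifferentiable (𝓡 2) (𝓡 2) (φ t)) {N : S2 → E3}
    (hN : IsNormalField (amb X) N) {p : S2} (hper : IsHypPerS2 X φ p)
    {f : S2 → ℝ} (hf : Continuous f) (hfi : ∀ (t : ℝ) (x : S2), f (φ t x) = f x) :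
    ∃ r0 > 0, ∀ r, |r| ≤ r0 → f (gam N p r) = f p := by
  obtain ⟨hXp, ⟨T0, hT0, hT0p⟩, Es, Eu, hdirect, hEs, hEu, T, -, hTs, hTu⟩ := hper
  have hVp : amb X p ≠ 0 := fun h => hXp (amb_eq_zero.1 h)
  let X0 : E2 := X p
  have hnotspan : ∀ v : E2, v ∉ Submodule.span ℝ {X0} → ∀ β : ℝ, dI p v ≠ β • amb X p := by
    intro v hv β h
    refine hv (Submodule.mem_span_singleton.2 ⟨β, ?_⟩)
    have h1 : dI p (v - β • X0) = 0 := by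
      rw [map_sub, map_smul, h]; exact sub_self _
    rw [← norm_eq_zero, norm_dI, norm_eq_zero] at h1
    exact (sub_eq_zero.1 h1).symm
  have hex : ¬ (Es 0 ≤ Submodule.span ℝ {X0} ∧ Eu 0 ≤ Submodule.span ℝ {X0}) := by
    rintro ⟨h1, h2⟩
    have h3 := (hdirect 0).submodule_iSup_eq_top
    have h4 : (⊤ : Submodule ℝ E2) ≤ Submodule.span ℝ {X0} := by
      rw [← h3]
      refine iSup_le fun i => ?_
      fin_cases i
      · exact h1
      · change Submodule.span ℝ {(X (φ 0 p) : E2)} ≤ _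
        rw [hF.zero]
        exact le_rfl
      · exact h2
    have h5 : Module.finrank ℝ (Submodule.span ℝ {X0}) ≤ 1 := by
      simpa using finrank_span_le_card (R := ℝ) ({X0} : Set E2)
    rw [top_le_iff.1 h4, finrank_top] at h5
    simp at h5
  rw [not_and_or, SetLike.not_le_iff_exists, SetLike.not_le_iff_exists] at hex
  rcases hex with ⟨v, hv, hvX⟩ | ⟨v, hv, hvX⟩
  · exact periodic_const hF hφ hN hVp (hnotspan v hvX)
      (fun η hη => exists_period_contraction hF hφ hT0 hT0p hEs hTs hv hη) hf hfi
  · exact periodic_const hF hφ hN hVp (hnotspan v hvX)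
      (fun η hη => exists_period_contraction hF hφ hT0 hT0p hEu hTu hv hη) hf hfi

/-- A hyperbolic singularity is isolated: `1` is not an eigenvalue of the differential of the
time-`T` map, so by the first order expansion it is an isolated fixed point of that map. -/
lemma hyperbolic_singularity_isolated {X : (x : S2) → TangentSpace (𝓡 2) x} {φ : ℝ → S2 → S2}
    (hF : IsSphereFlow φ (amb X)) (hφ : ∀ t, MDifferentiable (𝓡 2) (𝓡 2) (φ t)) {σ : S2}
    (hσ : IsHypSingS2 X φ σ) : ∃ T, ∀ᶠ z in 𝓝 σ, z ≠ σ → φ T z ≠ z := by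
  obtain ⟨-, hfix, Es, Eu, hcompl, hEs, hEu, T, -, hTs, hTu⟩ := hσ
  obtain ⟨D, hD, hDd⟩ := exists_ambient_deriv (hφ T) σ
  have hDd' : ∀ w, D (dI σ w) = dI σ (dfl φ T σ w) := by
    intro w
    have h1 : D (dI σ w) = dI (φ T σ) (dfl φ T σ w) := hDd w
    rwa [hfix] at h1
  have hσ0 : (σ : E3) ≠ 0 := ne_zero_of_mem_unit_sphere σ
  -- the radial projection is constant along rays
  have hDσ : D σ = 0 := by
    have h1 : HasDerivAt (fun s : ℝ => s • (σ : E3)) σ 1 := by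
      simpa using (hasDerivAt_id (1 : ℝ)).smul_const (σ : E3)
    have h2 : HasFDerivAt (fun y : E3 => (φ T (nrm y) : E3)) D ((1 : ℝ) • (σ : E3)) := by
      rw [one_smul]; exact hD
    have h3 := h2.comp_hasDerivAt (1 : ℝ) h1
    have h4 : HasDerivAt (fun _ : ℝ => (φ T σ : E3)) 0 1 := hasDerivAt_const _ _
    refine h3.unique (h4.congr_of_eventuallyEq ?_)
    filter_upwards [lt_mem_nhds (zero_lt_one (α := ℝ))] with s hs
    have h5 : nrm (s • (σ : E3)) = σ := by
      ext1
      rw [coe_nrm (smul_ne_zero hs.ne' hσ0), norm_smul, S2.norm_coe, smul_smul,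
        Real.norm_of_nonneg hs.le, mul_one, inv_mul_cancel₀ hs.ne', one_smul]
    simp only [Function.comp_def, h5]
  have hM : ∀ w, dfl φ T σ w = w → w = 0 := by
    intro w hw
    obtain ⟨ws, hws, wu, hwu, rfl⟩ : ∃ ws ∈ Es, ∃ wu ∈ Eu, ws + wu = w :=
      Submodule.mem_sup.1 (by rw [hcompl.sup_eq_top]; trivial)
    have h1 : dfl φ T σ ws ∈ Es := hEs T ws hws
    have h2 : dfl φ T σ wu ∈ Eu := hEu T wu hwu
    have h3 : dfl φ T σ ws - ws = wu - dfl φ T σ wu := by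
      rw [map_add] at hw
      rw [sub_eq_sub_iff_add_eq_add, hw, add_comm]
    have h4 : dfl φ T σ ws - ws = 0 :=
      Submodule.disjoint_def.1 hcompl.disjoint _ (Es.sub_mem h1 hws)
        (by rw [h3]; exact Eu.sub_mem hwu h2)
    have h5 : ‖dfl φ T σ ws‖ ≤ 1 / 2 * ‖ws‖ := hTs ws hws
    have h6 : ‖dfl φ (-T) σ wu‖ ≤ 1 / 2 * ‖wu‖ := hTu wu hwu
    have h7 : dfl φ T σ wu = wu := (sub_eq_zero.1 (h3 ▸ h4)).symm
    have h8 : dfl φ (-T) σ wu = wu := by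
      have := dfl_add hF hφ (-T) T σ wu
      rw [neg_add_cancel, dfl_zero hF, hfix, h7] at this
      exact this.symm
    rw [sub_eq_zero.1 h4] at h5
    rw [h8] at h6
    have e1 : ws = 0 := norm_eq_zero.1 (by linarith [norm_nonneg ws])
    have e2 : wu = 0 := norm_eq_zero.1 (by linarith [norm_nonneg wu])
    rw [e1, e2, add_zero]
  have hinj : ∀ u, D u = u → u = 0 := by
    intro u hu
    set c : ℝ := inner ℝ (σ : E3) u with hc
    obtain ⟨w, hw⟩ := mem_range_dI σ (u - c • (σ : E3)) (by
      rw [inner_sub_right, inner_smul_right, real_inner_self_eq_norm_sq, S2.norm_coe, ← hc]; ring)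
    have h1 : u = dI σ (dfl φ T σ w) := by
      rw [← hDd', hw, map_sub, map_smul, hDσ, smul_zero, sub_zero, hu]
    have h2 : c = 0 := by rw [hc, h1, inner_dI]
    rw [h2, zero_smul, sub_zero] at hw
    have h3 : dI σ (dfl φ T σ w - w) = 0 := by rw [map_sub, ← h1, hw, sub_self]
    rw [← norm_eq_zero, norm_dI, norm_eq_zero] at h3
    rw [← hw, hM w (sub_eq_zero.1 h3), map_zero]
  have hker : ((D - ContinuousLinearMap.id ℝ E3 : E3 →L[ℝ] E3) : E3 →ₗ[ℝ] E3).ker = ⊥ := by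
    rw [LinearMap.ker_eq_bot']
    intro u hu
    exact hinj u (sub_eq_zero.1 hu)
  obtain ⟨C, -, hC⟩ := LinearMap.exists_antilipschitzWith _ hker
  have hne := (hD.sub (hasFDerivAt_id (σ : E3))).eventually_ne (c := 0) ⟨C, hC⟩
  refine ⟨T, ?_⟩
  rw [eventually_nhdsWithin_iff] at hne
  filter_upwards [continuous_subtype_val.continuousAt.eventually hne] with z hz hzσ hTz
  refine hz (fun h => hzσ (Subtype.ext h)) ?_
  simp [nrm_coe, hTz]

/-! ### Invariant functions are constant -/

/-- If every singularity and periodic orbit of a `C¹` vector field on the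
2-sphere is hyperbolic, then every continuous function invariant under its flow is constant. -/
theorem stmt_8
    (X : (x : S2) → TangentSpace (𝓡 2) x)
    (hX : ContMDiff (𝓡 2) (𝓡 2).tangent 1 (fun x => (⟨x, X x⟩ : TangentBundle (𝓡 2) S2)))
    (φ : ℝ → S2 → S2)
    (hφ0 : ∀ x, φ 0 x = x)
    (hφadd : ∀ s t x, φ (s + t) x = φ s (φ t x))
    (hφcont : Continuous fun q : ℝ × S2 => φ q.1 q.2)
    (hφdiff : ∀ t, MDifferentiable (𝓡 2) (𝓡 2) (φ t))
    (hφX : ∀ x t, HasMFDerivAt 𝓘(ℝ, ℝ) (𝓡 2) (fun s => φ s x) t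
      ((1 : ℝ →L[ℝ] ℝ).smulRight (X (φ t x))))
    (hsing : ∀ σ : S2, X σ = 0 → IsHypSingS2 X φ σ)
    (hper : ∀ p : S2, X p ≠ 0 → (∃ T : ℝ, 0 < T ∧ φ T p = p) → IsHypPerS2 X φ p)
    (f : S2 → ℝ) (hf : Continuous f) (hfi : ∀ (t : ℝ) (x : S2), f (φ t x) = f x) :
    ∀ x y : S2, f x = f y := by
  have hF : IsSphereFlow φ (amb X) :=
    { zero := hφ0
      add := hφadd
      cont := hφcont
      deriv := hasDerivAt_amb hφX
      tan := fun x => inner_dI x (X x)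
      lip := lipschitz_amb hX }
  have hfin : {σ | amb X σ = 0}.Finite := by
    by_contra hinf
    have hclosed : IsClosed {σ | amb X σ = 0} := isClosed_eq hF.continuous_V continuous_const
    obtain ⟨σ, hσ, hacc⟩ := Set.Infinite.exists_accPt_of_subset_isCompact hinf hclosed.isCompact
      subset_rfl
    obtain ⟨T, hT⟩ := hyperbolic_singularity_isolated hF hφdiff (hsing σ (amb_eq_zero.1 hσ))
    obtain ⟨z, ⟨hzσ, hz⟩, hTz⟩ := ((accPt_iff_frequently.1 hacc).and_eventually hT).exists
    exact hTz hzσ ((hsing z (amb_eq_zero.1 hz)).2.1 T)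
  have hle : ∀ x y : S2, ¬ f x < f y := by
    intro x y hxy
    have hconn : IsPreconnected (univ : Set S2) :=
      (isPreconnected_iff_preconnectedSpace.1 (isPreconnected_sphere
        (by rw [← Module.finrank_eq_rank, finrank_euclideanSpace_fin]; norm_num) _ _)).isPreconnected_univ
    obtain ⟨c, hc, hcZ⟩ := (Ioo_infinite hxy).exists_notMem_finite (hfin.image f)
    obtain ⟨w, -, hw⟩ := hconn.intermediate_value (mem_univ x) (mem_univ y) hf.continuousOn
      (Ioo_subset_Icc_self hc)
    have hV : ∀ z, f z = c → amb X z ≠ 0 := fun z hz h0 => hcZ ⟨z, h0, hz⟩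
    have hxc := level_set_eq_univ hF hf hfi hV (fun p hp hT N hN =>
      hyperbolic_periodic_const hF hφdiff hN
        (hper p (fun h => hV p hp (amb_eq_zero.2 h)) hT) hf hfi) ⟨w, hw⟩ x
    exact hc.1.ne hxc
  exact fun x y => le_antisymm (not_lt.1 (hle y x)) (not_lt.1 (hle x y))

end
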